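/- arXiv:1610.02216 — 3 statements merged into one kernel-verified Lean document; each statement's English description precedes it below -/
import Mathlib

section
/- Assume l0, l1, l2, l3 ∈ ℤ_{≥0} with l3 = 0 and l0 ≥ l1 + l2 − 1, and let e1 > e3 > e2 be real numbers with e1+e2+e3 = 0 (corresponding to a purely imaginary modulus τ ∈ iℝ_{>0}). Then all the zeros of the spectral polynomial Q^{(l0,l1,l2,l3)}(E) are real and unequal. -/
open Polynomial

/-- The polynomial `q(E) = −(E/4 − e1(ã2+ã3)² − e2(ã1+ã3)² − e3(ã1+ã2)² + e3·α·β)`,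
where `α = ã0+ã1+ã2+ã3` and `β = −ã0+1/2+ã1+ã2+ã3`. -/
noncomputable def heunQE (e1 e2 e3 a0 a1 a2 a3 : ℝ) : Polynomial ℝ :=
  Polynomial.C (e1 * (a2 + a3) ^ 2 + e2 * (a1 + a3) ^ 2 + e3 * (a1 + a2) ^ 2
      - e3 * ((a0 + a1 + a2 + a3) * (-a0 + 1 / 2 + a1 + a2 + a3)))
    - Polynomial.C (1 / 4 : ℝ) * Polynomial.X

/-- The coefficients `c_m` (polynomials in `E`) of the local Heun solution at `e3`, defined by
`c_0 = 1`, `(e1−e3)(e2−e3)γ3 c_1 = q(E)`, and for `m ≥ 1`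
`(e1−e3)(e2−e3)(m+1)(m+γ3) c_{m+1} = −(m−1+α)(m−1+β) c_{m−1}
  + [m((m−1+γ3)(e1+e2−2e3) + (e2−e3)γ1 + (e1−e3)γ2) + q(E)] c_m`,
with `γ_i = 2ã_i + 1/2`, `α = ã0+ã1+ã2+ã3`, `β = −ã0+1/2+ã1+ã2+ã3`. -/
noncomputable def heunC (e1 e2 e3 a0 a1 a2 a3 : ℝ) : ℕ → Polynomial ℝ
  | 0 => 1
  | 1 => Polynomial.C (((e1 - e3) * (e2 - e3) * (2 * a3 + 1 / 2))⁻¹)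
      * heunQE e1 e2 e3 a0 a1 a2 a3
  | m + 2 =>
      Polynomial.C (((e1 - e3) * (e2 - e3) * ((m : ℝ) + 2) * ((m : ℝ) + 1 + (2 * a3 + 1 / 2)))⁻¹) *
        (Polynomial.C (-(((m : ℝ) + (a0 + a1 + a2 + a3))
              * ((m : ℝ) + (-a0 + 1 / 2 + a1 + a2 + a3))))
            * heunC e1 e2 e3 a0 a1 a2 a3 m
          + (Polynomial.C (((m : ℝ) + 1) * (((m : ℝ) + (2 * a3 + 1 / 2)) * (e1 + e2 - 2 * e3)
                + (e2 - e3) * (2 * a1 + 1 / 2) + (e1 - e3) * (2 * a2 + 1 / 2)))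
              + heunQE e1 e2 e3 a0 a1 a2 a3) * heunC e1 e2 e3 a0 a1 a2 a3 (m + 1))

/-- `P_{ã0,ã1,ã2,ã3}(E)`: the monic normalization of `c_{N+1}(E)`,
where `N = −(ã0+ã1+ã2+ã3)`. -/
noncomputable def specP (e1 e2 e3 a0 a1 a2 a3 : ℝ) (N : ℕ) : Polynomial ℝ :=
  Polynomial.C ((heunC e1 e2 e3 a0 a1 a2 a3 (N + 1)).leadingCoeff)⁻¹ *
    heunC e1 e2 e3 a0 a1 a2 a3 (N + 1)

/-- The factor `P⁽⁰⁾(E)` of the spectral polynomial. -/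
noncomputable def specP0 (e1 e2 e3 : ℝ) (l0 l1 l2 l3 : ℕ) : Polynomial ℝ :=
  if (l0 + l1 + l2 + l3) % 2 = 0 then
    specP e1 e2 e3 (-(l0 : ℝ) / 2) (-(l1 : ℝ) / 2) (-(l2 : ℝ) / 2) (-(l3 : ℝ) / 2)
      ((l0 + l1 + l2 + l3) / 2)
  else if l1 + l2 + l3 + 3 ≤ l0 then
    specP e1 e2 e3 (-(l0 : ℝ) / 2) (((l1 : ℝ) + 1) / 2) (((l2 : ℝ) + 1) / 2) (((l3 : ℝ) + 1) / 2)
      ((l0 - l1 - l2 - l3 - 3) / 2)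
  else if l0 = l1 + l2 + l3 + 1 then 1
  else
    specP e1 e2 e3 (((l0 : ℝ) + 1) / 2) (-(l1 : ℝ) / 2) (-(l2 : ℝ) / 2) (-(l3 : ℝ) / 2)
      ((l1 + l2 + l3 - l0 - 1) / 2)

/-- The factor `P⁽¹⁾(E)` of the spectral polynomial. -/
noncomputable def specP1 (e1 e2 e3 : ℝ) (l0 l1 l2 l3 : ℕ) : Polynomial ℝ :=
  if (l0 + l1 + l2 + l3) % 2 = 0 then
    if l2 + l3 + 2 ≤ l0 + l1 then
      specP e1 e2 e3 (-(l0 : ℝ) / 2) (-(l1 : ℝ) / 2) (((l2 : ℝ) + 1) / 2) (((l3 : ℝ) + 1) / 2)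
        ((l0 + l1 - l2 - l3) / 2 - 1)
    else if l0 + l1 = l2 + l3 then 1
    else
      specP e1 e2 e3 (((l0 : ℝ) + 1) / 2) (((l1 : ℝ) + 1) / 2) (-(l2 : ℝ) / 2) (-(l3 : ℝ) / 2)
        ((l2 + l3 - l0 - l1) / 2 - 1)
  else
    if l0 + l2 + l3 + 3 ≤ l1 then
      specP e1 e2 e3 (((l0 : ℝ) + 1) / 2) (-(l1 : ℝ) / 2) (((l2 : ℝ) + 1) / 2) (((l3 : ℝ) + 1) / 2)
        ((l1 - l0 - l2 - l3 - 3) / 2)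
    else if l1 = l0 + l2 + l3 + 1 then 1
    else
      specP e1 e2 e3 (-(l0 : ℝ) / 2) (((l1 : ℝ) + 1) / 2) (-(l2 : ℝ) / 2) (-(l3 : ℝ) / 2)
        ((l0 + l2 + l3 - l1 - 1) / 2)

/-- The factor `P⁽²⁾(E)` of the spectral polynomial. -/
noncomputable def specP2 (e1 e2 e3 : ℝ) (l0 l1 l2 l3 : ℕ) : Polynomial ℝ :=
  if (l0 + l1 + l2 + l3) % 2 = 0 then
    if l1 + l3 + 2 ≤ l0 + l2 then
      specP e1 e2 e3 (-(l0 : ℝ) / 2) (((l1 : ℝ) + 1) / 2) (-(l2 : ℝ) / 2) (((l3 : ℝ) + 1) / 2)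
        ((l0 + l2 - l1 - l3) / 2 - 1)
    else if l0 + l2 = l1 + l3 then 1
    else
      specP e1 e2 e3 (((l0 : ℝ) + 1) / 2) (-(l1 : ℝ) / 2) (((l2 : ℝ) + 1) / 2) (-(l3 : ℝ) / 2)
        ((l1 + l3 - l0 - l2) / 2 - 1)
  else
    if l0 + l1 + l3 + 3 ≤ l2 then
      specP e1 e2 e3 (((l0 : ℝ) + 1) / 2) (((l1 : ℝ) + 1) / 2) (-(l2 : ℝ) / 2) (((l3 : ℝ) + 1) / 2)
        ((l2 - l0 - l1 - l3 - 3) / 2)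
    else if l2 = l0 + l1 + l3 + 1 then 1
    else
      specP e1 e2 e3 (-(l0 : ℝ) / 2) (-(l1 : ℝ) / 2) (((l2 : ℝ) + 1) / 2) (-(l3 : ℝ) / 2)
        ((l0 + l1 + l3 - l2 - 1) / 2)

/-- The factor `P⁽³⁾(E)` of the spectral polynomial. -/
noncomputable def specP3 (e1 e2 e3 : ℝ) (l0 l1 l2 l3 : ℕ) : Polynomial ℝ :=
  if (l0 + l1 + l2 + l3) % 2 = 0 then
    if l1 + l2 + 2 ≤ l0 + l3 then
      specP e1 e2 e3 (-(l0 : ℝ) / 2) (((l1 : ℝ) + 1) / 2) (((l2 : ℝ) + 1) / 2) (-(l3 : ℝ) / 2)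
        ((l0 + l3 - l1 - l2) / 2 - 1)
    else if l0 + l3 = l1 + l2 then 1
    else
      specP e1 e2 e3 (((l0 : ℝ) + 1) / 2) (-(l1 : ℝ) / 2) (-(l2 : ℝ) / 2) (((l3 : ℝ) + 1) / 2)
        ((l1 + l2 - l0 - l3) / 2 - 1)
  else
    if l0 + l1 + l2 + 3 ≤ l3 then
      specP e1 e2 e3 (((l0 : ℝ) + 1) / 2) (((l1 : ℝ) + 1) / 2) (((l2 : ℝ) + 1) / 2) (-(l3 : ℝ) / 2)
        ((l3 - l0 - l1 - l2 - 3) / 2)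
    else if l3 = l0 + l1 + l2 + 1 then 1
    else
      specP e1 e2 e3 (-(l0 : ℝ) / 2) (-(l1 : ℝ) / 2) (-(l2 : ℝ) / 2) (((l3 : ℝ) + 1) / 2)
        ((l0 + l1 + l2 - l3 - 1) / 2)

/-- The spectral polynomial `Q^{(l0,l1,l2,l3)}(E) = P⁽⁰⁾P⁽¹⁾P⁽²⁾P⁽³⁾` of the
Treibich-Verdier operator `H^{(l0,l1,l2,l3)}`. -/
noncomputable def specQ (e1 e2 e3 : ℝ) (l0 l1 l2 l3 : ℕ) : Polynomial ℝ :=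
  specP0 e1 e2 e3 l0 l1 l2 l3 * specP1 e1 e2 e3 l0 l1 l2 l3 *
    specP2 e1 e2 e3 l0 l1 l2 l3 * specP3 e1 e2 e3 l0 l1 l2 l3


/-- real and simple zeros -/
def GoodP (f : Polynomial ℝ) : Prop :=
  f ≠ 0 ∧ (∀ z : ℂ, aeval z f = 0 → z.im = 0) ∧
    ∀ x : ℝ, f.eval x = 0 → f.derivative.eval x ≠ 0

lemma GoodP.one : GoodP 1 := by
  refine ⟨one_ne_zero, ?_, ?_⟩ <;> simp

lemma aeval_ofReal (f : Polynomial ℝ) (x : ℝ) : aeval (x : ℂ) f = ((f.eval x : ℝ) : ℂ) := by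
  have := Polynomial.aeval_algebraMap_apply (A := ℝ) ℂ x f
  simpa using this

lemma GoodP.mul {f g : Polynomial ℝ} (hf : GoodP f) (hg : GoodP g)
    (h : ∀ x : ℝ, f.eval x = 0 → g.eval x = 0 → False) : GoodP (f * g) := by
  refine ⟨mul_ne_zero hf.1 hg.1, ?_, ?_⟩
  · intro z hz
    rw [map_mul, mul_eq_zero] at hz
    exact hz.elim (hf.2.1 z) (hg.2.1 z)
  · intro x hx hd
    rw [derivative_mul] at hd
    simp only [eval_mul, eval_add] at hx hd
    rcases mul_eq_zero.1 hx with h0 | h0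
    · rw [h0, zero_mul, add_zero] at hd
      rcases mul_eq_zero.1 hd with h1 | h1
      · exact hf.2.2 x h0 h1
      · exact h x h0 h1
    · rw [h0, mul_zero, zero_add] at hd
      rcases mul_eq_zero.1 hd with h1 | h1
      · exact h x h1 h0
      · exact hg.2.2 x h0 h1

lemma GoodP.C_mul {f : Polynomial ℝ} (hf : GoodP f) {c : ℝ} (hc : c ≠ 0) : GoodP (C c * f) := by
  refine GoodP.mul ⟨by simpa using hc, ?_, ?_⟩ hf ?_
  · intro z hz
    simp [hc] at hz
  · intro x hx
    simp [hc] at hx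
  · intro x hx
    simp [hc] at hx

lemma GoodP.concl {f : Polynomial ℝ} (hf : GoodP f) :
    f.map (algebraMap ℝ ℂ) ≠ 0 ∧ (f.map (algebraMap ℝ ℂ)).roots.Nodup ∧
    ∀ z ∈ (f.map (algebraMap ℝ ℂ)).roots, z.im = 0 := by
  have h0 : f.map (algebraMap ℝ ℂ) ≠ 0 := by
    rw [Ne, Polynomial.map_eq_zero]; exact hf.1
  refine ⟨h0, ?_, ?_⟩
  · rw [Multiset.nodup_iff_count_le_one]
    intro z
    rw [count_roots]
    by_contra hlt
    push Not at hlt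
    rw [one_lt_rootMultiplicity_iff_isRoot h0] at hlt
    obtain ⟨hr, hd⟩ := hlt
    rw [IsRoot.def, eval_map_algebraMap] at hr
    rw [derivative_map, IsRoot.def, eval_map_algebraMap] at hd
    have hz := hf.2.1 z hr
    have hz' : z = ((z.re : ℝ) : ℂ) := by
      apply Complex.ext <;> simp [hz]
    rw [hz', aeval_ofReal] at hr hd
    exact hf.2.2 z.re (by exact_mod_cast hr) (by exact_mod_cast hd)
  · intro z hz
    rw [mem_roots h0, IsRoot.def, eval_map_algebraMap] at hz
    exact hf.2.1 z hz

/-- Three-term recurrences with the right signs have real simple zeros. -/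
lemma sturm (c : ℕ → Polynomial ℝ) (s b d : ℕ → ℝ) (N : ℕ)
    (h0 : c 0 = 1) (h1 : c 1 = C (s 0) * X + C (b 0))
    (hrec : ∀ m, c (m + 2) = (C (s (m + 1)) * X + C (b (m + 1))) * c (m + 1) - C (d m) * c m)
    (hs : ∀ m, 0 < s m) (hd : ∀ m, m + 1 ≤ N → 0 < d m) : GoodP (c (N + 1)) := by
  have W : ∀ x : ℝ, ∀ m, m ≤ N → 0 < (derivative (c (m + 1))).eval x * (c m).eval x
      - (c (m + 1)).eval x * (derivative (c m)).eval x := by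
    intro x m
    induction m with
    | zero => intro _; simp [h0, h1, hs]
    | succ m ih =>
      intro hm
      have i := ih (by omega)
      have := mul_pos (hd m hm) i
      have h2 := mul_nonneg (hs (m + 1)).le (sq_nonneg ((c (m + 1)).eval x))
      rw [hrec m]
      simp only [derivative_sub, derivative_mul, derivative_add, derivative_C, derivative_X,
        eval_sub, eval_mul, eval_add, eval_C, eval_X, eval_zero, eval_one]
      nlinarith
  have I : ∀ z : ℂ, ∀ m, m ≤ N → 0 < z.im * z.im → 0 < z.im * ((aeval z (c (m + 1))).im * (aeval z (c m)).re
      - (aeval z (c (m + 1))).re * (aeval z (c m)).im) := by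
    intro z m
    induction m with
    | zero =>
      intro _ hz
      have := mul_pos (hs 0) hz
      simp [h0, h1]
      nlinarith
    | succ m ih =>
      intro hm hz
      have i := ih (by omega) hz
      have := mul_pos (hd m hm) i
      have h2 := mul_nonneg (hs (m + 1)).le (mul_nonneg hz.le
        (add_nonneg (sq_nonneg ((aeval z (c (m + 1))).re)) (sq_nonneg ((aeval z (c (m + 1))).im))))
      rw [hrec m]
      simp only [map_sub, map_mul, map_add, aeval_C, aeval_X, Complex.coe_algebraMap,
        Complex.sub_re, Complex.sub_im, Complex.mul_re, Complex.mul_im, Complex.add_re,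
        Complex.add_im, Complex.ofReal_re, Complex.ofReal_im]
      nlinarith
  refine ⟨?_, ?_, ?_⟩
  · intro h
    have := W 0 N le_rfl
    simp [h] at this
  · intro z hz
    by_contra hne
    have := I z N le_rfl (mul_self_pos.2 hne)
    simp [hz] at this
  · intro x hx hd'
    have := W x N le_rfl
    simp [hx, hd'] at this

lemma heun_good (e1 e2 e3 a0 a1 a2 a3 : ℝ) (N : ℕ) (h13 : e3 < e1) (h32 : e2 < e3)
    (hN : a0 + a1 + a2 + a3 = -(N : ℝ)) (hg : 0 < 2 * a3 + 1 / 2)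
    (hb : N = 0 ∨ 0 < -a0 + 1 / 2 + a1 + a2 + a3) :
    GoodP (heunC e1 e2 e3 a0 a1 a2 a3 (N + 1)) := by
  have hAB : (e1 - e3) * (e2 - e3) < 0 := mul_neg_of_pos_of_neg (by linarith) (by linarith)
  set A : ℕ → ℝ := fun m => (e1 - e3) * (e2 - e3) * ((m : ℝ) + 1) * ((m : ℝ) + (2 * a3 + 1 / 2))
    with hA
  have hAneg : ∀ m, A m < 0 := by
    intro m
    have : (0 : ℝ) ≤ m := Nat.cast_nonneg m
    apply mul_neg_of_neg_of_pos (mul_neg_of_neg_of_pos hAB (by linarith)) (by linarith)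
  set κ : ℝ := (e1 * (a2 + a3) ^ 2 + e2 * (a1 + a3) ^ 2 + e3 * (a1 + a2) ^ 2
      - e3 * ((a0 + a1 + a2 + a3) * (-a0 + 1 / 2 + a1 + a2 + a3))) with hκ
  refine sturm _ (fun m => -(A m)⁻¹ * (1 / 4)) (fun m => (A m)⁻¹ *
      ((m : ℝ) * (((m : ℝ) - 1 + (2 * a3 + 1 / 2)) * (e1 + e2 - 2 * e3)
                + (e2 - e3) * (2 * a1 + 1 / 2) + (e1 - e3) * (2 * a2 + 1 / 2)) + κ))
      (fun m => (A (m + 1))⁻¹ * (((m : ℝ) + (a0 + a1 + a2 + a3))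
              * ((m : ℝ) + (-a0 + 1 / 2 + a1 + a2 + a3)))) N ?_ ?_ ?_ ?_ ?_
  · simp [heunC]
  · rw [heunC, heunQE, ← hκ]
    simp only [hA, CharP.cast_eq_zero, zero_add, mul_one, zero_mul, C_mul, C_neg]
    ring
  · intro m
    rw [heunC, heunQE, ← hκ]
    have : A (m + 1) = (e1 - e3) * (e2 - e3) * ((m : ℝ) + 2) * ((m : ℝ) + 1 + (2 * a3 + 1 / 2)) := by
      simp only [hA]; push_cast; ring
    rw [← this]
    have h3 : ((m + 1 : ℕ) : ℝ) - 1 = m := by push_cast; ring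
    have h4 : ((m + 1 : ℕ) : ℝ) = m + 1 := by push_cast; ring
    rw [h3, h4]
    simp only [C_mul, C_neg, C_add]
    ring
  · intro m
    have := inv_lt_zero.2 (hAneg m)
    linarith
  · intro m hm
    have h1 := inv_lt_zero.2 (hAneg (m + 1))
    have hm' : (m : ℝ) + 1 ≤ N := by exact_mod_cast hm
    have h2 : 0 < -a0 + 1 / 2 + a1 + a2 + a3 := by
      rcases hb with h | h
      · omega
      · exact h
    have : (0 : ℝ) ≤ m := Nat.cast_nonneg m
    exact mul_pos_of_neg_of_neg h1 (mul_neg_of_neg_of_pos (by linarith) (by linarith))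

/-- The Heun equation satisfied by the polynomial solution. -/
lemma heun_ode (e1 e2 e3 a0 a1 a2 a3 x : ℝ) (N : ℕ) (h13 : e3 < e1) (h32 : e2 < e3)
    (hN : a0 + a1 + a2 + a3 = -(N : ℝ)) (hg : 0 < 2 * a3 + 1 / 2)
    (hx : (heunC e1 e2 e3 a0 a1 a2 a3 (N + 1)).eval x = 0) :
    ∃ p : Polynomial ℝ, p ≠ 0 ∧
      (X * (X - C (e1 - e3)) * (X - C (e2 - e3))) * derivative (derivative p)
      + (C (2 * a3 + 1 / 2) * ((X - C (e1 - e3)) * (X - C (e2 - e3)))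
        + C (2 * a1 + 1 / 2) * (X * (X - C (e2 - e3)))
        + C (2 * a2 + 1 / 2) * (X * (X - C (e1 - e3)))) * derivative p
      + (C ((a0 + a1 + a2 + a3) * (-a0 + 1 / 2 + a1 + a2 + a3)) * X
        - C ((heunQE e1 e2 e3 a0 a1 a2 a3).eval x)) * p = 0 := by
  have hAB : (e1 - e3) * (e2 - e3) ≠ 0 :=
    (mul_neg_of_pos_of_neg (by linarith) (by linarith)).ne
  set q := (heunQE e1 e2 e3 a0 a1 a2 a3).eval x with hq
  set c : ℕ → ℝ := fun m => (heunC e1 e2 e3 a0 a1 a2 a3 m).eval x with hc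
  have c0 : c 0 = 1 := by simp [hc, heunC]
  have c1 : (e1 - e3) * (e2 - e3) * (2 * a3 + 1 / 2) * c 1 = q := by
    simp only [hc, heunC, eval_mul, eval_C]
    rw [mul_inv_cancel_left₀ (mul_ne_zero hAB hg.ne')]
  have crec : ∀ m : ℕ, (e1 - e3) * (e2 - e3) * ((m : ℝ) + 2) * ((m : ℝ) + 1 + (2 * a3 + 1 / 2))
      * c (m + 2) = -(((m : ℝ) + (a0 + a1 + a2 + a3)) * ((m : ℝ) + (-a0 + 1 / 2 + a1 + a2 + a3)))
        * c m + (((m : ℝ) + 1) * (((m : ℝ) + (2 * a3 + 1 / 2)) * (e1 + e2 - 2 * e3)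
                + (e2 - e3) * (2 * a1 + 1 / 2) + (e1 - e3) * (2 * a2 + 1 / 2)) + q) * c (m + 1) := by
    intro m
    have : (0 : ℝ) ≤ m := Nat.cast_nonneg m
    have h1 : (m : ℝ) + 2 ≠ 0 := by positivity
    have h2 : (m : ℝ) + 1 + (2 * a3 + 1 / 2) ≠ 0 := by positivity
    simp only [hc]
    rw [heunC]
    simp only [eval_mul, eval_C, eval_add]
    rw [mul_inv_cancel_left₀ (mul_ne_zero (mul_ne_zero hAB h1) h2)]
  have cz : ∀ k, c (N + 1 + k) = 0 ∧ c (N + 2 + k) = 0 := by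
    have step : ∀ m : ℕ, c (m + 1) = 0 → ((m : ℝ) + (a0 + a1 + a2 + a3) = 0 ∨ c m = 0) →
        c (m + 2) = 0 := by
      intro m h1 h2
      have := crec m
      have hm : (0 : ℝ) ≤ m := Nat.cast_nonneg m
      have h3 : (m : ℝ) + 2 ≠ 0 := by positivity
      have h4 : (m : ℝ) + 1 + (2 * a3 + 1 / 2) ≠ 0 := by positivity
      have h5 : (e1 - e3) * (e2 - e3) * ((m : ℝ) + 2) * ((m : ℝ) + 1 + (2 * a3 + 1 / 2))
          * c (m + 2) = 0 := by
        rw [this, h1]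
        rcases h2 with h2 | h2 <;> rw [h2] <;> ring
      exact (mul_eq_zero.1 h5).resolve_left (mul_ne_zero (mul_ne_zero hAB h3) h4)
    intro k
    induction k with
    | zero => exact ⟨hx, step N hx (Or.inl (by rw [hN]; ring))⟩
    | succ k ih =>
      refine ⟨?_, ?_⟩
      · rw [show N + 1 + (k + 1) = N + 2 + k by ring]; exact ih.2
      · rw [show N + 2 + (k + 1) = (N + 1 + k) + 2 by ring]
        apply step
        · rw [show N + 1 + k + 1 = N + 2 + k by ring]; exact ih.2
        · exact Or.inr ih.1
  let p : Polynomial ℝ := ∑ m ∈ Finset.range (N + 1), C (c m) * X ^ m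
  have pc : ∀ m, p.coeff m = c m := by
    intro m
    simp only [p, finsetSum_coeff, coeff_C_mul_X_pow]
    rw [Finset.sum_ite_eq (Finset.range (N + 1)) m]
    split_ifs with h
    · rfl
    · have : N + 1 ≤ m := by simpa using h
      obtain ⟨k, rfl⟩ := Nat.exists_eq_add_of_le this
      exact (cz k).1.symm
  refine ⟨p, ?_, ?_⟩
  · intro h
    have := pc 0
    rw [h, c0] at this
    simp at this
  · have key : ∀ f g h : Polynomial ℝ, ∀ A B r1 r2 r3 α q : ℝ,
      (X * (X - C A) * (X - C B)) * f + (C r3 * ((X - C A) * (X - C B)) + C r1 * (X * (X - C B))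
        + C r2 * (X * (X - C A))) * g + (C α * X - C q) * h
      = X ^ 3 * f - C (A + B) * (X ^ 2 * f) + C (A * B) * (X ^ 1 * f)
        + C (r1 + r2 + r3) * (X ^ 2 * g) - C (r3 * (A + B) + r1 * B + r2 * A) * (X ^ 1 * g)
        + C (r3 * (A * B)) * g + C α * (X ^ 1 * h) - C q * h := by
      intros
      simp only [C_add, C_mul]
      ring
    rw [key]
    ext m
    simp only [coeff_add, coeff_sub, coeff_C_mul, coeff_X_pow_mul', coeff_derivative, pc, coeff_zero]
    rcases m with _ | _ | _ | m
    · norm_num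
      rw [c0]; linear_combination c1
    · have := crec 0
      norm_num at this ⊢
      linear_combination this
    · have := crec 1
      norm_num at this ⊢
      linear_combination this
    · have := crec (m + 2)
      have e1' : m + 1 + 1 + 1 - 3 = m := by omega
      have e2' : m + 1 + 1 + 1 - 2 = m + 1 := by omega
      have e3' : m + 1 + 1 + 1 - 1 = m + 2 := by omega
      rw [if_pos (by omega), if_pos (by omega), if_pos (by omega), e1', e2', e3']
      rw [show m + 2 + 1 = m + 3 by ring, show m + 2 + 2 = m + 4 by ring] at this
      simp only [add_assoc, Nat.reduceAdd] at this ⊢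
      push_cast at this ⊢
      linear_combination this

/-- Comparing vanishing orders at a simple zero `e` of `T`. -/
lemma order_cmp (T δ p q : Polynomial ℝ) (e : ℝ) (hT : T.eval e = 0) (hp : p ≠ 0) (hq : q ≠ 0)
    (h : T * (p * derivative q - derivative p * q) + δ * (p * q) = 0) :
    ∃ n : ℤ, (n : ℝ) * (derivative T).eval e + δ.eval e = 0 := by
  obtain ⟨T1, rfl⟩ := dvd_iff_isRoot.2 hT
  have fact : ∀ w : Polynomial ℝ, w ≠ 0 → ∃ (n : ℕ) (u : Polynomial ℝ), u.eval e ≠ 0 ∧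
      w = (X - C e) ^ n * u ∧
      (X - C e) * derivative w = (X - C e) ^ n * (C (n : ℝ) * u + (X - C e) * derivative u) := by
    intro w hw
    obtain ⟨u, hu, hnd⟩ := exists_eq_pow_rootMultiplicity_mul_and_not_dvd w hw e
    refine ⟨rootMultiplicity e w, u, fun h => hnd (dvd_iff_isRoot.2 h), hu, ?_⟩
    generalize rootMultiplicity e w = n at hu
    subst hu
    rcases n with _ | n
    · simp
    · simp only [derivative_mul, derivative_X_sub_C_pow, Nat.add_sub_cancel]
      ring
  obtain ⟨r, u, hu, hpu, hpd⟩ := fact p hp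
  obtain ⟨s, v, hv, hqv, hqd⟩ := fact q hq
  have h2 : (X - C e) ^ (r + s) * (T1 * (u * (C (s : ℝ) * v + (X - C e) * derivative v)
      - (C (r : ℝ) * u + (X - C e) * derivative u) * v) + δ * (u * v)) = 0 := by
    have h3 : T1 * (p * ((X - C e) * derivative q) - ((X - C e) * derivative p) * q)
        + δ * (p * q) = 0 := by linear_combination h
    rw [hqd, hpd] at h3
    rw [hpu, hqv] at h3
    rw [pow_add]
    linear_combination h3
  have h4 := (mul_eq_zero.1 h2).resolve_left (pow_ne_zero _ (X_sub_C_ne_zero e))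
  have h5 := congrArg (eval e) h4
  simp only [eval_mul, eval_add, eval_sub, eval_X, eval_C, sub_self, zero_mul, add_zero,
    eval_zero] at h5
  refine ⟨(s : ℤ) - r, ?_⟩
  simp only [derivative_mul, derivative_X_sub_C, one_mul, eval_add, eval_mul, eval_sub, eval_X,
    eval_C, sub_self, zero_mul, add_zero]
  push_cast
  apply mul_left_cancel₀ (mul_ne_zero hu hv)
  linear_combination h5

lemma order_cmp_one (T M w : Polynomial ℝ) (e : ℝ) (hT : T.eval e = 0) (hw0 : w ≠ 0)
    (hw : T * derivative w = M * w) :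
    ∃ n : ℤ, (n : ℝ) * (derivative T).eval e = M.eval e := by
  obtain ⟨n, hn⟩ := order_cmp T (-M) 1 w e hT one_ne_zero hw0
    (by rw [derivative_one]; linear_combination hw)
  refine ⟨n, ?_⟩
  rw [eval_neg] at hn
  linarith

/-- The two exponents. -/
noncomputable def par (b : Bool) (l : ℕ) : ℝ := if b then ((l : ℝ) + 1) / 2 else -(l : ℝ) / 2

lemma par_half (b : Bool) (l : ℕ) : ∃ k : ℤ, par b l = (k : ℝ) / 2 := by
  cases b
  · exact ⟨-(l : ℤ), by simp [par]⟩
  · exact ⟨(l : ℤ) + 1, by simp [par]⟩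

lemma par_cases (b c : Bool) (l : ℕ) : par c l = par b l ∨ par c l = 1 / 2 - par b l := by
  cases b <;> cases c <;> simp [par] <;> ring_nf <;> simp

lemma par_ne (b c : Bool) (h : b ≠ c) (l : ℕ) : par c l = 1 / 2 - par b l := by
  cases b <;> cases c <;> simp [par] at h ⊢ <;> ring

lemma par_sq (b c : Bool) (l : ℕ) : par c l ^ 2 - par c l / 2 = par b l ^ 2 - par b l / 2 := by
  rcases par_cases b c l with h | h <;> rw [h] <;> ring

lemma not_half (n k : ℤ) (h : (n : ℝ) = 1 / 2 - k) : False := by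
  have : (2 : ℝ) * n + 2 * k = 1 := by linarith
  have h2 : 2 * n + 2 * k = 1 := by exact_mod_cast this
  omega

lemma wronsk (T G H K L δ p q : Polynomial ℝ)
    (op : T * derivative (derivative p) + G * derivative p + K * p = 0)
    (oq : T * derivative (derivative q) + H * derivative q + L * q = 0)
    (hG : H = G + 2 * δ)
    (hid : T * (K - L + derivative δ) = (derivative T - G - δ) * δ) :
    T * derivative (T * (p * derivative q - derivative p * q) + δ * (p * q))
      = (derivative T - G - δ) * (T * (p * derivative q - derivative p * q) + δ * (p * q)) := by
  subst hG
  simp only [derivative_mul, derivative_add, derivative_sub]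
  linear_combination T * p * oq - T * q * op + p * q * hid

lemma heun_wronsk_id (e1 e2 e3 x a0 a1 a2 a3 b0 b1 b2 b3 : ℝ) (hsum : e1 + e2 + e3 = 0)
    (h0 : b0 = a0 ∨ b0 = 1 / 2 - a0) (h1 : b1 = a1 ∨ b1 = 1 / 2 - a1)
    (h2 : b2 = a2 ∨ b2 = 1 / 2 - a2) (h3 : b3 = a3 ∨ b3 = 1 / 2 - a3) :
    (X * (X - C (e1 - e3)) * (X - C (e2 - e3))) *
      ((C ((a0 + a1 + a2 + a3) * (-a0 + 1 / 2 + a1 + a2 + a3)) * X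
          - C ((heunQE e1 e2 e3 a0 a1 a2 a3).eval x))
        - (C ((b0 + b1 + b2 + b3) * (-b0 + 1 / 2 + b1 + b2 + b3)) * X
          - C ((heunQE e1 e2 e3 b0 b1 b2 b3).eval x))
        + derivative (C (b3 - a3) * ((X - C (e1 - e3)) * (X - C (e2 - e3)))
            + C (b1 - a1) * (X * (X - C (e2 - e3))) + C (b2 - a2) * (X * (X - C (e1 - e3)))))
      = (derivative (X * (X - C (e1 - e3)) * (X - C (e2 - e3)))
          - (C (2 * a3 + 1 / 2) * ((X - C (e1 - e3)) * (X - C (e2 - e3)))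
            + C (2 * a1 + 1 / 2) * (X * (X - C (e2 - e3)))
            + C (2 * a2 + 1 / 2) * (X * (X - C (e1 - e3))))
          - (C (b3 - a3) * ((X - C (e1 - e3)) * (X - C (e2 - e3)))
            + C (b1 - a1) * (X * (X - C (e2 - e3))) + C (b2 - a2) * (X * (X - C (e1 - e3)))))
        * (C (b3 - a3) * ((X - C (e1 - e3)) * (X - C (e2 - e3)))
            + C (b1 - a1) * (X * (X - C (e2 - e3))) + C (b2 - a2) * (X * (X - C (e1 - e3)))) := by
  have he : e3 = -e1 - e2 := by linarith
  subst he
  apply Polynomial.funext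
  intro t
  simp only [heunQE, derivative_mul, derivative_add, derivative_sub, derivative_C, derivative_X,
    eval_mul, eval_add, eval_sub, eval_C, eval_X, eval_zero, eval_one]
  rcases h0 with rfl | rfl <;> rcases h1 with rfl | rfl <;> rcases h2 with rfl | rfl <;>
    rcases h3 with rfl | rfl <;> ring

lemma heun_disj (e1 e2 e3 x : ℝ) (l0 l1 l2 l3 M N : ℕ) (s0 s1 s2 s3 t0 t1 t2 t3 : Bool)
    (hS : s1 = t1 ∨ s2 = t2 ∨ s3 = t3) (hD : s1 ≠ t1 ∨ s2 ≠ t2 ∨ s3 ≠ t3)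
    (h13 : e3 < e1) (h32 : e2 < e3) (hsum : e1 + e2 + e3 = 0)
    (hM : par s0 l0 + par s1 l1 + par s2 l2 + par s3 l3 = -(M : ℝ))
    (hN : par t0 l0 + par t1 l1 + par t2 l2 + par t3 l3 = -(N : ℝ))
    (hg : 0 < 2 * par s3 l3 + 1 / 2) (hg' : 0 < 2 * par t3 l3 + 1 / 2)
    (hx : (heunC e1 e2 e3 (par s0 l0) (par s1 l1) (par s2 l2) (par s3 l3) (M + 1)).eval x = 0)
    (hy : (heunC e1 e2 e3 (par t0 l0) (par t1 l1) (par t2 l2) (par t3 l3) (N + 1)).eval x = 0) :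
    False := by
  obtain ⟨p, hp, op⟩ := heun_ode _ _ _ _ _ _ _ _ _ h13 h32 hM hg hx
  obtain ⟨q, hq, oq⟩ := heun_ode _ _ _ _ _ _ _ _ _ h13 h32 hN hg' hy
  obtain ⟨k1, hk1⟩ := par_half s1 l1
  obtain ⟨k2, hk2⟩ := par_half s2 l2
  obtain ⟨k3, hk3⟩ := par_half s3 l3
  have r1 : s1 = t1 → par t1 l1 = par s1 l1 := fun h => by rw [h]
  have r2 : s2 = t2 → par t2 l2 = par s2 l2 := fun h => by rw [h]
  have r3 : s3 = t3 → par t3 l3 = par s3 l3 := fun h => by rw [h]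
  have n1 : s1 ≠ t1 → par t1 l1 = 1 / 2 - par s1 l1 := fun h => par_ne _ _ h _
  have n2 : s2 ≠ t2 → par t2 l2 = 1 / 2 - par s2 l2 := fun h => par_ne _ _ h _
  have n3 : s3 ≠ t3 → par t3 l3 = 1 / 2 - par s3 l3 := fun h => par_ne _ _ h _
  have hid := heun_wronsk_id e1 e2 e3 x _ _ _ _ _ _ _ _ hsum (par_cases s0 t0 l0)
    (par_cases s1 t1 l1) (par_cases s2 t2 l2) (par_cases s3 t3 l3)
  generalize par s0 l0 = a0 at *
  generalize par s1 l1 = a1 at *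
  generalize par s2 l2 = a2 at *
  generalize par s3 l3 = a3 at *
  generalize par t0 l0 = b0 at *
  generalize par t1 l1 = b1 at *
  generalize par t2 l2 = b2 at *
  generalize par t3 l3 = b3 at *
  have hw := wronsk _ _ _ _ _ _ p q op oq (by simp only [C_add, C_sub, C_mul, C_ofNat]; ring) hid
  have hA : e1 - e3 ≠ 0 := by intro h; linarith
  have hB : e2 - e3 ≠ 0 := by intro h; linarith
  have hAB : e1 - e3 - (e2 - e3) ≠ 0 := by intro h; linarith
  have hBA : e2 - e3 - (e1 - e3) ≠ 0 := by intro h; linarith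
  clear op oq hid hx hy
  generalize e1 - e3 = A at *
  generalize e2 - e3 = B at *
  by_cases hw0 : (X * (X - C A) * (X - C B)) * (p * derivative q - derivative p * q)
      + (C (b3 - a3) * ((X - C A) * (X - C B)) + C (b1 - a1) * (X * (X - C B))
        + C (b2 - a2) * (X * (X - C A))) * (p * q) = 0
  · have oc := fun e hT => order_cmp _ _ p q e hT hp hq hw0
    rcases hD with h | h | h
    · obtain ⟨n, hn⟩ := oc A (by simp)
      simp [n1 h] at hn
      refine not_half (-n) k1 ?_
      apply mul_left_cancel₀ (mul_ne_zero hA hAB)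
      push_cast
      linear_combination -hn - 2 * A * (A - B) * hk1
    · obtain ⟨n, hn⟩ := oc B (by simp)
      simp [n2 h] at hn
      refine not_half (-n) k2 ?_
      apply mul_left_cancel₀ (mul_ne_zero hB hBA)
      push_cast
      linear_combination -hn - 2 * B * (B - A) * hk2
    · obtain ⟨n, hn⟩ := oc 0 (by simp)
      simp [n3 h] at hn
      refine not_half (-n) k3 ?_
      apply mul_left_cancel₀ (mul_ne_zero hA hB)
      push_cast
      linear_combination -hn - 2 * A * B * hk3
  · have oc := fun e hT => order_cmp_one _ _ _ e hT hw0 hw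
    rcases hS with h | h | h
    · obtain ⟨n, hn⟩ := oc A (by simp)
      simp [r1 h] at hn
      refine not_half n k1 ?_
      apply mul_left_cancel₀ (mul_ne_zero hA hAB)
      linear_combination hn - 2 * A * (A - B) * hk1
    · obtain ⟨n, hn⟩ := oc B (by simp)
      simp [r2 h] at hn
      refine not_half n k2 ?_
      apply mul_left_cancel₀ (mul_ne_zero hB hBA)
      linear_combination hn - 2 * B * (B - A) * hk2
    · obtain ⟨n, hn⟩ := oc 0 (by simp)
      simp [r3 h] at hn
      refine not_half n k3 ?_
      apply mul_left_cancel₀ (mul_ne_zero hA hB)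
      linear_combination hn - 2 * A * B * hk3

/-- `f` is trivial, or one of the factors with sign pattern `s`. -/
def HeunRep (e1 e2 e3 : ℝ) (l0 l1 l2 l3 : ℕ) (s0 s1 s2 s3 : Bool) (f : Polynomial ℝ) : Prop :=
  f = 1 ∨ ∃ N : ℕ, f = specP e1 e2 e3 (par s0 l0) (par s1 l1) (par s2 l2) (par s3 l3) N ∧
    par s0 l0 + par s1 l1 + par s2 l2 + par s3 l3 = -(N : ℝ) ∧
    0 < 2 * par s3 l3 + 1 / 2 ∧
    (N = 0 ∨ 0 < -par s0 l0 + 1 / 2 + par s1 l1 + par s2 l2 + par s3 l3)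

lemma HeunRep.good {e1 e2 e3 : ℝ} {l0 l1 l2 l3 : ℕ} {s0 s1 s2 s3 : Bool} {f : Polynomial ℝ}
    (h13 : e3 < e1) (h32 : e2 < e3) (h : HeunRep e1 e2 e3 l0 l1 l2 l3 s0 s1 s2 s3 f) : GoodP f := by
  rcases h with rfl | ⟨N, rfl, h1, h2, h3⟩
  · exact GoodP.one
  · have := heun_good e1 e2 e3 _ _ _ _ N h13 h32 h1 h2 h3
    exact this.C_mul (inv_ne_zero (leadingCoeff_ne_zero.2 this.1))

lemma HeunRep.disj {e1 e2 e3 : ℝ} {l0 l1 l2 l3 : ℕ} {s0 s1 s2 s3 t0 t1 t2 t3 : Bool}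
    {f g : Polynomial ℝ}
    (h13 : e3 < e1) (h32 : e2 < e3) (hsum : e1 + e2 + e3 = 0)
    (hS : s1 = t1 ∨ s2 = t2 ∨ s3 = t3) (hD : s1 ≠ t1 ∨ s2 ≠ t2 ∨ s3 ≠ t3)
    (hf : HeunRep e1 e2 e3 l0 l1 l2 l3 s0 s1 s2 s3 f) (hg : HeunRep e1 e2 e3 l0 l1 l2 l3 t0 t1 t2 t3 g)
    (x : ℝ) (hx : f.eval x = 0) (hy : g.eval x = 0) : False := by
  rcases hf with rfl | ⟨M, rfl, h1, h2, h3⟩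
  · simp at hx
  rcases hg with rfl | ⟨N, rfl, k1, k2, k3⟩
  · simp at hy
  have g1 := heun_good e1 e2 e3 _ _ _ _ M h13 h32 h1 h2 h3
  have g2 := heun_good e1 e2 e3 _ _ _ _ N h13 h32 k1 k2 k3
  rw [specP, eval_mul, eval_C] at hx hy
  exact heun_disj e1 e2 e3 x l0 l1 l2 l3 M N s0 s1 s2 s3 t0 t1 t2 t3 hS hD h13 h32 hsum h1 k1 h2 k2
    ((mul_eq_zero.1 hx).resolve_left (inv_ne_zero (leadingCoeff_ne_zero.2 g1.1)))
    ((mul_eq_zero.1 hy).resolve_left (inv_ne_zero (leadingCoeff_ne_zero.2 g2.1)))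

lemma good_four {f g h k : Polynomial ℝ} (hf : GoodP f) (hg : GoodP g) (hh : GoodP h)
    (hk : GoodP k)
    (fg : ∀ x : ℝ, f.eval x = 0 → g.eval x = 0 → False)
    (fh : ∀ x : ℝ, f.eval x = 0 → h.eval x = 0 → False)
    (fk : ∀ x : ℝ, f.eval x = 0 → k.eval x = 0 → False)
    (gh : ∀ x : ℝ, g.eval x = 0 → h.eval x = 0 → False)
    (gk : ∀ x : ℝ, g.eval x = 0 → k.eval x = 0 → False)
    (hk' : ∀ x : ℝ, h.eval x = 0 → k.eval x = 0 → False) : GoodP (f * g * h * k) := by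
  refine ((hf.mul hg fg).mul hh ?_).mul hk ?_
  · intro x hx hy
    rw [eval_mul, mul_eq_zero] at hx
    rcases hx with hx | hx
    · exact fh x hx hy
    · exact gh x hx hy
  · intro x hx hy
    rw [eval_mul, eval_mul, mul_eq_zero, mul_eq_zero] at hx
    rcases hx with (hx | hx) | hx
    · exact fk x hx hy
    · exact gk x hx hy
    · exact hk' x hx hy

lemma good_of_reps {e1 e2 e3 : ℝ} {l0 l1 l2 l3 : ℕ} (s0 s1 s2 s3 t0 t1 t2 t3 u0 u1 u2 u3
      v0 v1 v2 v3 : Bool)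
    {f g h k : Polynomial ℝ}
    (h13 : e3 < e1) (h32 : e2 < e3) (hsum : e1 + e2 + e3 = 0)
    (hf : HeunRep e1 e2 e3 l0 l1 l2 l3 s0 s1 s2 s3 f) (hg : HeunRep e1 e2 e3 l0 l1 l2 l3 t0 t1 t2 t3 g)
    (hh : HeunRep e1 e2 e3 l0 l1 l2 l3 u0 u1 u2 u3 h) (hk : HeunRep e1 e2 e3 l0 l1 l2 l3 v0 v1 v2 v3 k)
    (c1 : (s1 = t1 ∨ s2 = t2 ∨ s3 = t3) ∧ (s1 ≠ t1 ∨ s2 ≠ t2 ∨ s3 ≠ t3))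
    (c2 : (s1 = u1 ∨ s2 = u2 ∨ s3 = u3) ∧ (s1 ≠ u1 ∨ s2 ≠ u2 ∨ s3 ≠ u3))
    (c3 : (s1 = v1 ∨ s2 = v2 ∨ s3 = v3) ∧ (s1 ≠ v1 ∨ s2 ≠ v2 ∨ s3 ≠ v3))
    (c4 : (t1 = u1 ∨ t2 = u2 ∨ t3 = u3) ∧ (t1 ≠ u1 ∨ t2 ≠ u2 ∨ t3 ≠ u3))
    (c5 : (t1 = v1 ∨ t2 = v2 ∨ t3 = v3) ∧ (t1 ≠ v1 ∨ t2 ≠ v2 ∨ t3 ≠ v3))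
    (c6 : (u1 = v1 ∨ u2 = v2 ∨ u3 = v3) ∧ (u1 ≠ v1 ∨ u2 ≠ v2 ∨ u3 ≠ v3)) :
    GoodP (f * g * h * k) :=
  good_four (hf.good h13 h32) (hg.good h13 h32) (hh.good h13 h32) (hk.good h13 h32)
    (hf.disj h13 h32 hsum c1.1 c1.2 hg) (hf.disj h13 h32 hsum c2.1 c2.2 hh)
    (hf.disj h13 h32 hsum c3.1 c3.2 hk) (hg.disj h13 h32 hsum c4.1 c4.2 hh)
    (hg.disj h13 h32 hsum c5.1 c5.2 hk) (hh.disj h13 h32 hsum c6.1 c6.2 hk)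

/-- Natural-number form of the conditions on a factor whose first sign is `false`. -/
lemma HeunRep.mk_spec {e1 e2 e3 : ℝ} {l0 l1 l2 : ℕ} (s0 s1 s2 s3 : Bool) (N : ℕ)
    (h1 : par s0 l0 + par s1 l1 + par s2 l2 + par s3 0 = -(N : ℝ))
    (h3 : N = 0 ∨ 0 < -par s0 l0 + 1 / 2 + par s1 l1 + par s2 l2 + par s3 0) :
    HeunRep e1 e2 e3 l0 l1 l2 0 s0 s1 s2 s3
      (specP e1 e2 e3 (par s0 l0) (par s1 l1) (par s2 l2) (par s3 0) N) := by
  refine Or.inr ⟨N, rfl, h1, ?_, h3⟩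
  cases s3 <;> norm_num [par]

lemma good_even (l0 l1 l2 : ℕ) (hl : l1 + l2 ≤ l0 + 1) (hp : (l0 + l1 + l2 + 0) % 2 = 0)
    (e1 e2 e3 : ℝ) (h13 : e3 < e1) (h32 : e2 < e3) (hsum : e1 + e2 + e3 = 0) :
    GoodP (specQ e1 e2 e3 l0 l1 l2 0) := by
  have hl' : (l1 : ℝ) + l2 ≤ l0 := by exact_mod_cast (by omega : l1 + l2 ≤ l0)
  refine good_of_reps (l0 := l0) (l1 := l1) (l2 := l2) (l3 := 0) false false false false false false true true false true false true
    false true true false h13 h32 hsum ?_ ?_ ?_ ?_ (by decide) (by decide) (by decide)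
    (by decide) (by decide) (by decide)
  · rw [specP0, if_pos hp]
    obtain ⟨N, hN⟩ : ∃ N, (l0 + l1 + l2 + 0) / 2 = N := ⟨_, rfl⟩
    have hc : (l0 : ℝ) + l1 + l2 = 2 * N := by exact_mod_cast (by omega : l0 + l1 + l2 = 2 * N)
    rw [hN]
    refine HeunRep.mk_spec false false false false N ?_ (Or.inr ?_) <;> simp [par] <;> linarith
  · rw [specP1, if_pos hp]
    split_ifs with i1 i2
    · obtain ⟨N, hN⟩ : ∃ N, (l0 + l1 - l2 - 0) / 2 - 1 = N := ⟨_, rfl⟩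
      have hc : (l0 : ℝ) + l1 = 2 * N + l2 + 2 := by
        exact_mod_cast (by omega : l0 + l1 = 2 * N + l2 + 2)
      rw [hN]
      refine HeunRep.mk_spec false false true true N ?_ (Or.inr ?_) <;> simp [par] <;> linarith
    · exact Or.inl rfl
    · omega
  · rw [specP2, if_pos hp]
    split_ifs with i1 i2
    · obtain ⟨N, hN⟩ : ∃ N, (l0 + l2 - l1 - 0) / 2 - 1 = N := ⟨_, rfl⟩
      have hc : (l0 : ℝ) + l2 = 2 * N + l1 + 2 := by
        exact_mod_cast (by omega : l0 + l2 = 2 * N + l1 + 2)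
      rw [hN]
      refine HeunRep.mk_spec false true false true N ?_ (Or.inr ?_) <;> simp [par] <;> linarith
    · exact Or.inl rfl
    · omega
  · rw [specP3, if_pos hp]
    split_ifs with i1 i2
    · obtain ⟨N, hN⟩ : ∃ N, (l0 + 0 - l1 - l2) / 2 - 1 = N := ⟨_, rfl⟩
      have hc : (l0 : ℝ) = 2 * N + l1 + l2 + 2 := by
        exact_mod_cast (by omega : l0 = 2 * N + l1 + l2 + 2)
      rw [hN]
      refine HeunRep.mk_spec false true true false N ?_ (Or.inr ?_) <;> simp [par] <;> linarith
    · exact Or.inl rfl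
    · omega

lemma good_odd (l0 l1 l2 : ℕ) (hl : l1 + l2 ≤ l0 + 1) (hp : ¬ (l0 + l1 + l2 + 0) % 2 = 0)
    (e1 e2 e3 : ℝ) (h13 : e3 < e1) (h32 : e2 < e3) (hsum : e1 + e2 + e3 = 0) :
    GoodP (specQ e1 e2 e3 l0 l1 l2 0) := by
  have hl' : (l1 : ℝ) + l2 ≤ l0 + 1 := by exact_mod_cast hl
  have h0 : HeunRep e1 e2 e3 l0 l1 l2 0 false true true true (specP0 e1 e2 e3 l0 l1 l2 0) ∨
      HeunRep e1 e2 e3 l0 l1 l2 0 true false false false (specP0 e1 e2 e3 l0 l1 l2 0) := by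
    rw [specP0, if_neg hp]
    split_ifs with i1 i2
    · left
      obtain ⟨N, hN⟩ : ∃ N, (l0 - l1 - l2 - 0 - 3) / 2 = N := ⟨_, rfl⟩
      have hc : (l0 : ℝ) = 2 * N + l1 + l2 + 3 := by
        exact_mod_cast (by omega : l0 = 2 * N + l1 + l2 + 3)
      rw [hN]
      refine HeunRep.mk_spec false true true true N ?_ (Or.inr ?_) <;> simp [par] <;> linarith
    · exact Or.inl (Or.inl rfl)
    · right
      have hN : (l1 + l2 + 0 - l0 - 1) / 2 = 0 := by omega
      have hc : (l0 : ℝ) + 1 = l1 + l2 := by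
        exact_mod_cast (by omega : l0 + 1 = l1 + l2)
      rw [hN]
      refine HeunRep.mk_spec true false false false 0 ?_ (Or.inl rfl)
      simp [par]
      linarith
  have h1 : HeunRep e1 e2 e3 l0 l1 l2 0 false true false false (specP1 e1 e2 e3 l0 l1 l2 0) := by
    rw [specP1, if_neg hp]
    split_ifs with i1 i2
    · omega
    · exact Or.inl rfl
    · obtain ⟨N, hN⟩ : ∃ N, (l0 + l2 + 0 - l1 - 1) / 2 = N := ⟨_, rfl⟩
      have hc : (l0 : ℝ) + l2 = 2 * N + l1 + 1 := by
        exact_mod_cast (by omega : l0 + l2 = 2 * N + l1 + 1)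
      rw [hN]
      refine HeunRep.mk_spec false true false false N ?_ (Or.inr ?_) <;> simp [par] <;> linarith
  have h2 : HeunRep e1 e2 e3 l0 l1 l2 0 false false true false (specP2 e1 e2 e3 l0 l1 l2 0) := by
    rw [specP2, if_neg hp]
    split_ifs with i1 i2
    · omega
    · exact Or.inl rfl
    · obtain ⟨N, hN⟩ : ∃ N, (l0 + l1 + 0 - l2 - 1) / 2 = N := ⟨_, rfl⟩
      have hc : (l0 : ℝ) + l1 = 2 * N + l2 + 1 := by
        exact_mod_cast (by omega : l0 + l1 = 2 * N + l2 + 1)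
      rw [hN]
      refine HeunRep.mk_spec false false true false N ?_ (Or.inr ?_) <;> simp [par] <;> linarith
  have h3 : HeunRep e1 e2 e3 l0 l1 l2 0 false false false true (specP3 e1 e2 e3 l0 l1 l2 0) := by
    rw [specP3, if_neg hp]
    rw [if_neg (by omega), if_neg (by omega)]
    obtain ⟨N, hN⟩ : ∃ N, (l0 + l1 + l2 - 0 - 1) / 2 = N := ⟨_, rfl⟩
    have hc : (l0 : ℝ) + l1 + l2 = 2 * N + 1 := by
      exact_mod_cast (by omega : l0 + l1 + l2 = 2 * N + 1)
    rw [hN]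
    refine HeunRep.mk_spec false false false true N ?_ (Or.inr ?_) <;> simp [par] <;> linarith
  rcases h0 with h0 | h0
  · exact good_of_reps _ _ _ _ _ _ _ _ _ _ _ _ _ _ _ _ h13 h32 hsum h0 h1 h2 h3 (by decide)
      (by decide) (by decide) (by decide) (by decide) (by decide)
  · exact good_of_reps _ _ _ _ _ _ _ _ _ _ _ _ _ _ _ _ h13 h32 hsum h0 h1 h2 h3 (by decide)
      (by decide) (by decide) (by decide) (by decide) (by decide)

/-- If `l3 = 0` and `l0 ≥ l1 + l2 − 1`, with `e1 > e3 > e2` and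
`e1+e2+e3 = 0` (purely imaginary modulus), then all zeros of the spectral polynomial
`Q^{(l0,l1,l2,l3)}` are real and unequal. -/
theorem specQ_real_distinct_roots_case1
    (l0 l1 l2 l3 : ℕ) (hl3 : l3 = 0) (hl : l1 + l2 ≤ l0 + 1)
    (e1 e2 e3 : ℝ) (h13 : e3 < e1) (h32 : e2 < e3) (hsum : e1 + e2 + e3 = 0) :
    (specQ e1 e2 e3 l0 l1 l2 l3).map (algebraMap ℝ ℂ) ≠ 0 ∧
    ((specQ e1 e2 e3 l0 l1 l2 l3).map (algebraMap ℝ ℂ)).roots.Nodup ∧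
    ∀ z ∈ ((specQ e1 e2 e3 l0 l1 l2 l3).map (algebraMap ℝ ℂ)).roots, z.im = 0 := by
  subst hl3
  apply GoodP.concl
  by_cases hp : (l0 + l1 + l2 + 0) % 2 = 0
  · exact good_even l0 l1 l2 hl hp e1 e2 e3 h13 h32 hsum
  · exact good_odd l0 l1 l2 hl hp e1 e2 e3 h13 h32 hsum
end

section
/- Assume l0, l1, l2, l3 ∈ ℤ_{≥0} with l0 + l3 + 1 = l1 + l2, l2 + l3 ≥ l0 + l1 + 1 and l1 + l3 ≥ l0 + l2 + 1, and let e1 > e3 > e2 be real numbers with e1+e2+e3 = 0 (corresponding to a purely imaginary modulus τ ∈ iℝ_{>0}). Then all the zeros of the spectral polynomial Q^{(l0,l1,l2,l3)}(E) are real and unequal. -/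
open Polynomial

namespace HeunAux

/-- Heun operator in a coordinate where one singular point is the origin. -/
noncomputable def hop (u v g gu gv k q : ℝ) (Y : ℝ[X]) : ℝ[X] :=
  X * (X - C u) * (X - C v) * derivative (derivative Y)
    + (C g * (X - C u) * (X - C v) + C gu * X * (X - C v) + C gv * X * (X - C u)) * derivative Y
    + (C k * X - C q) * Y

theorem hop_coeff_zero (u v g gu gv k q : ℝ) (Y : ℝ[X]) :
    (hop u v g gu gv k q Y).coeff 0 = u * v * g * Y.coeff 1 - q * Y.coeff 0 := by
  simp [hop, mul_coeff_zero, coeff_derivative]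
  ring

theorem hop_expand (u v g gu gv k q : ℝ) (Y : ℝ[X]) :
    hop u v g gu gv k q Y = C (u * v) * (X ^ 1 * derivative (derivative Y))
      - C (u + v) * (X ^ 2 * derivative (derivative Y)) + X ^ 3 * derivative (derivative Y)
      + C (g * u * v) * derivative Y
      - C (g * (u + v) + gu * v + gv * u) * (X ^ 1 * derivative Y)
      + C (g + gu + gv) * (X ^ 2 * derivative Y)
      + C k * (X ^ 1 * Y) - C q * Y := by
  simp only [hop, C_mul, C_add]
  ring

theorem hop_coeff_succ (u v g gu gv k q : ℝ) (Y : ℝ[X]) (m : ℕ) :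
    (hop u v g gu gv k q Y).coeff (m + 1) =
      u * v * (m + 2) * (m + 1 + g) * Y.coeff (m + 2)
      - ((m + 1) * ((m + g) * (u + v) + gu * v + gv * u) + q) * Y.coeff (m + 1)
      + (m * (m - 1) + (g + gu + gv) * m + k) * Y.coeff m := by
  rw [hop_expand]
  rcases m with _ | _ | m
  · simp only [coeff_add, coeff_sub, coeff_C_mul, coeff_X_pow_mul', coeff_derivative]
    norm_num
    ring
  · simp only [coeff_add, coeff_sub, coeff_C_mul, coeff_X_pow_mul', coeff_derivative]
    norm_num
    ring
  · simp only [coeff_add, coeff_sub, coeff_C_mul, coeff_X_pow_mul', coeff_derivative]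
    have e1 : m + 1 + 1 + 1 - 1 = m + 2 := by omega
    have e2 : m + 1 + 1 + 1 - 2 = m + 1 := by omega
    have e3 : m + 1 + 1 + 1 - 3 = m := by omega
    rw [e1, e2, e3]
    norm_num
    ring

theorem hop_shift (u v g gu gv k q : ℝ) (Y : ℝ[X]) :
    (hop u v g gu gv k q Y).comp (X + C v) =
      hop (u - v) (-v) gv gu g k (q - k * v) (Y.comp (X + C v)) := by
  simp only [hop, derivative_comp, add_comp, mul_comp, sub_comp, X_comp, C_comp, derivative_add,
    derivative_X, derivative_C, add_zero, one_mul, C_sub, C_neg, C_mul]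
  ring

theorem sturm_aux (c : ℕ → ℝ[X]) (s b d : ℕ → ℝ) (N : ℕ)
    (h0 : c 0 = 1) (h1 : c 1 = C (s 0) * X + C (b 0))
    (hrec : ∀ m, m < N → c (m + 2) = (C (s (m + 1)) * X + C (b (m + 1))) * c (m + 1)
      - C (d m) * c m)
    (hs0 : ∀ m, m ≤ N → s m ≠ 0) :
    ∀ m, m ≤ N → (c m).natDegree ≤ m ∧ (c m).coeff m ≠ 0 ∧
      (c (m + 1)).natDegree ≤ m + 1 ∧ (c (m + 1)).coeff (m + 1) ≠ 0 := by
  intro m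
  induction m with
  | zero =>
    intro _
    refine ⟨by simp [h0], by simp [h0], ?_, ?_⟩
    · rw [h1]; exact natDegree_linear_le
    · rw [h1]; simpa [coeff_C] using hs0 0 (by omega)
  | succ m ih =>
    intro hm
    obtain ⟨i1, i2, i3, i4⟩ := ih (by omega)
    refine ⟨i3, i4, ?_, ?_⟩
    · rw [hrec m (by omega)]
      refine (natDegree_sub_le _ _).trans (max_le ?_ ?_)
      · refine natDegree_mul_le.trans ?_
        have := natDegree_linear_le (a := s (m + 1)) (b := b (m + 1))
        omega
      · refine (natDegree_C_mul_le _ _).trans (by omega)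
    · rw [hrec m (by omega)]
      have e1 : (c m).coeff (m + 1 + 1) = 0 := coeff_eq_zero_of_natDegree_lt (by omega)
      have e2 : (c (m + 1)).coeff (m + 1 + 1) = 0 := coeff_eq_zero_of_natDegree_lt (by omega)
      have : ((C (s (m + 1)) * X + C (b (m + 1))) * c (m + 1) - C (d m) * c m).coeff (m + 1 + 1)
          = s (m + 1) * (c (m + 1)).coeff (m + 1) := by
        rw [add_mul, mul_assoc]
        simp [e1, e2]
      rw [this]
      exact mul_ne_zero (hs0 _ hm) i4

/-- A nonzero real polynomial with as many distinct real roots as its degree. -/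
def Good (F : ℝ[X]) : Prop :=
  F ≠ 0 ∧ ∃ s : Finset ℝ, s.card = F.natDegree ∧ ∀ x ∈ s, F.eval x = 0

theorem Good.C_mul {F : ℝ[X]} (h : Good F) {a : ℝ} (ha : a ≠ 0) : Good (C a * F) := by
  obtain ⟨h0, s, hs, hr⟩ := h
  refine ⟨mul_ne_zero (by simpa using ha) h0, s, ?_, ?_⟩
  · rw [hs, natDegree_C_mul ha]
  · intro x hx; simp [hr x hx]

theorem Good.mul {F G : ℝ[X]} (hF : Good F) (hG : Good G)
    (hd : ∀ x, F.eval x = 0 → G.eval x = 0 → False) : Good (F * G) := by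
  classical
  obtain ⟨h0, s, hs, hr⟩ := hF
  obtain ⟨h0', s', hs', hr'⟩ := hG
  refine ⟨mul_ne_zero h0 h0', s ∪ s', ?_, ?_⟩
  · rw [Finset.card_union_of_disjoint, hs, hs', natDegree_mul h0 h0']
    rw [Finset.disjoint_left]
    intro x hx hx'
    exact hd x (hr x hx) (hr' x hx')
  · intro x hx
    rcases Finset.mem_union.1 hx with h | h
    · simp [hr x h]
    · simp [hr' x h]

theorem Good.final {F : ℝ[X]} (h : Good F) :
    F.map (algebraMap ℝ ℂ) ≠ 0 ∧ (F.map (algebraMap ℝ ℂ)).roots.Nodup ∧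
    ∀ z ∈ (F.map (algebraMap ℝ ℂ)).roots, z.im = 0 := by
  classical
  obtain ⟨h0, s, hs, hr⟩ := h
  have hne : F.map (algebraMap ℝ ℂ) ≠ 0 := by
    rwa [Ne, Polynomial.map_eq_zero]
  have hle : (s.image (algebraMap ℝ ℂ)).val ≤ (F.map (algebraMap ℝ ℂ)).roots := by
    rw [Multiset.le_iff_subset (Finset.nodup _)]
    intro z hz
    obtain ⟨x, hx, rfl⟩ := Finset.mem_image.1 (show z ∈ s.image (algebraMap ℝ ℂ) from hz)
    rw [mem_roots hne, IsRoot, eval_map_algebraMap, aeval_algebraMap_apply]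
    have := hr x hx
    simp [coe_aeval_eq_eval, this]
  have hc : (F.map (algebraMap ℝ ℂ)).roots.card ≤ (s.image (algebraMap ℝ ℂ)).val.card := by
    refine (card_roots' _).trans ?_
    rw [natDegree_map, Finset.card_val,
      Finset.card_image_of_injective _ (algebraMap ℝ ℂ).injective, hs]
  have heq := Multiset.eq_of_le_of_card_le hle hc
  refine ⟨hne, heq ▸ Finset.nodup _, ?_⟩
  intro z hz
  rw [← heq] at hz
  obtain ⟨x, hx, rfl⟩ := Finset.mem_image.1 (show z ∈ s.image (algebraMap ℝ ℂ) from hz)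
  simp

theorem good_of_complex {F : ℝ[X]} (h0 : F ≠ 0)
    (hreal : ∀ z : ℂ, aeval z F = 0 → z.im = 0)
    (hsimp : ∀ x : ℝ, F.eval x = 0 → (derivative F).eval x ≠ 0) : Good F := by
  classical
  have hne : F.map (algebraMap ℝ ℂ) ≠ 0 := by
    rwa [Ne, Polynomial.map_eq_zero]
  have hz : ∀ z ∈ (F.map (algebraMap ℝ ℂ)).roots, ∃ x : ℝ, z = (x : ℂ) ∧ F.eval x = 0 := by
    intro z hz
    rw [mem_roots hne, IsRoot, eval_map_algebraMap] at hz
    have h1 := hreal z hz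
    have h2 : z = ((z.re : ℝ) : ℂ) := by
      apply Complex.ext <;> simp [h1]
    refine ⟨z.re, h2, ?_⟩
    rw [h2] at hz
    have h3 : aeval (algebraMap ℝ ℂ z.re) F = 0 := hz
    rw [aeval_algebraMap_apply] at h3
    simpa [coe_aeval_eq_eval] using h3
  have hnd : (F.map (algebraMap ℝ ℂ)).roots.Nodup := by
    rw [Multiset.nodup_iff_count_le_one]
    intro z
    by_contra hcon
    push Not at hcon
    rw [count_roots] at hcon
    have hr := (one_lt_rootMultiplicity_iff_isRoot hne).1 hcon
    obtain ⟨x, rfl, hx⟩ := hz z ((mem_roots hne).2 hr.1)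
    apply hsimp x hx
    have h4 := hr.2
    rw [derivative_map, IsRoot, eval_map_algebraMap] at h4
    have h3 : aeval (algebraMap ℝ ℂ x) (derivative F) = 0 := h4
    rw [aeval_algebraMap_apply] at h3
    simpa [coe_aeval_eq_eval] using h3
  refine ⟨h0, (F.map (algebraMap ℝ ℂ)).roots.toFinset.image Complex.re, ?_, ?_⟩
  · rw [Finset.card_image_of_injOn, Multiset.toFinset_card_of_nodup hnd,
      IsAlgClosed.card_roots_eq_natDegree, natDegree_map]
    intro z hz' w hw' hzw
    obtain ⟨x, rfl, -⟩ := hz z (by simpa using hz')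
    obtain ⟨y, rfl, -⟩ := hz w (by simpa using hw')
    simpa using hzw
  · intro x hx
    obtain ⟨z, hz', rfl⟩ := Finset.mem_image.1 hx
    obtain ⟨y, rfl, hy⟩ := hz z (by simpa using hz')
    simpa using hy

theorem sturm (c : ℕ → ℝ[X]) (s b d : ℕ → ℝ) (N : ℕ)
    (h0 : c 0 = 1) (h1 : c 1 = C (s 0) * X + C (b 0))
    (hrec : ∀ m, m < N → c (m + 2) = (C (s (m + 1)) * X + C (b (m + 1))) * c (m + 1)
      - C (d m) * c m)
    (hs0 : ∀ m, m ≤ N → s m ≠ 0)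
    (hpos : ∀ m, m < N → 0 < d m * s m * s (m + 1)) : Good (c (N + 1)) := by
  have hdeg := sturm_aux c s b d N h0 h1 hrec hs0
  have hne : c (N + 1) ≠ 0 := by
    intro h
    have := (hdeg N le_rfl).2.2.2
    simp [h] at this
  have step : ∀ m, m < N → ∀ x y : ℝ, 0 < s m * x → 0 ≤ y →
      0 < s (m + 1) * (s (m + 1) * y + d m * x) := by
    intro m hm x y hx hy
    have hp := hpos m hm
    have hsm : s m ≠ 0 := hs0 m (by omega)
    have h2 : 0 < (d m * s m * s (m + 1)) * (s m * x) := mul_pos hp hx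
    have h3 : 0 < s m ^ 2 := by positivity
    have h4 : 0 < s m ^ 2 * (s (m + 1) * (d m * x)) := by
      calc 0 < _ := h2
        _ = _ := by ring
    have h5 : 0 < s (m + 1) * (d m * x) := (pos_iff_pos_of_mul_pos h4).1 h3
    have h6 : 0 ≤ s (m + 1) ^ 2 * y := by positivity
    calc 0 < s (m + 1) ^ 2 * y + s (m + 1) * (d m * x) := by linarith
      _ = _ := by ring
  have hsq : ∀ m, m ≤ N → 0 < s m * s m := fun m hm => by
    have := hs0 m hm
    exact mul_self_pos.2 this
  apply good_of_complex hne
  · intro z hz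
    have key : ∀ m, m ≤ N → ∃ S : ℝ, 0 < s m * S ∧
        aeval z (c (m + 1)) * aeval (starRingEnd ℂ z) (c m)
          - aeval z (c m) * aeval (starRingEnd ℂ z) (c (m + 1))
          = (z - starRingEnd ℂ z) * (S : ℂ) := by
      intro m
      induction m with
      | zero =>
        intro _
        refine ⟨s 0, hsq 0 (by omega), ?_⟩
        simp [h0, h1]
        ring
      | succ m ih =>
        intro hm
        obtain ⟨S, hS, hK⟩ := ih (by omega)
        refine ⟨s (m + 1) * Complex.normSq (aeval z (c (m + 1))) + d m * S,
          step m (by omega) _ _ hS (Complex.normSq_nonneg _), ?_⟩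
        have hconj : aeval (starRingEnd ℂ z) (c (m + 1))
            = starRingEnd ℂ (aeval z (c (m + 1))) := by
          rw [aeval_conj]
        have hns : ((Complex.normSq (aeval z (c (m + 1))) : ℝ) : ℂ)
            = aeval z (c (m + 1)) * aeval (starRingEnd ℂ z) (c (m + 1)) := by
          rw [hconj, Complex.mul_conj]
        push_cast
        rw [hns, hrec m (by omega)]
        simp only [map_sub, map_mul, map_add, aeval_C, aeval_X, Complex.coe_algebraMap]
        linear_combination (d m : ℂ) * hK
    obtain ⟨S, hS, hK⟩ := key N le_rfl
    have hz' : aeval (starRingEnd ℂ z) (c (N + 1)) = 0 := by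
      rw [aeval_conj, hz, map_zero]
    rw [hz, hz'] at hK
    have hS0 : (S : ℂ) ≠ 0 := by
      intro h
      have : S = 0 := by exact_mod_cast h
      simp [this] at hS
    have : z - starRingEnd ℂ z = 0 := by
      have h5 : (z - starRingEnd ℂ z) * (S : ℂ) = 0 := by rw [← hK]; ring
      exact (mul_eq_zero.1 h5).resolve_right hS0
    exact Complex.conj_eq_iff_im.1 (sub_eq_zero.1 this).symm
  · intro x hx hx'
    have key : ∀ m, m ≤ N → 0 < s m * ((derivative (c (m + 1))).eval x * (c m).eval x
          - (derivative (c m)).eval x * (c (m + 1)).eval x) := by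
      intro m
      induction m with
      | zero =>
        intro _
        simpa [h0, h1] using hs0 0 (by omega)
      | succ m ih =>
        intro hm
        have := step m (by omega) _ _ (ih (by omega)) (sq_nonneg ((c (m + 1)).eval x))
        rw [hrec m (by omega)]
        simp only [derivative_sub, derivative_mul, derivative_add, derivative_C, derivative_X,
          eval_sub, eval_mul, eval_add, eval_C, eval_X, eval_zero, eval_one]
        refine this.trans_eq ?_
        ring
    have := key N le_rfl
    simp [hx, hx'] at this

theorem root_decomp {p : ℝ[X]} (hp : p ≠ 0) (e : ℝ) : ∃ (n : ℕ) (S : ℝ[X]),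
    p = (X - C e) ^ n * S ∧ S.eval e ≠ 0 ∧
    (X - C e) * derivative p = (X - C e) ^ n * (C (n : ℝ) * S + (X - C e) * derivative S) := by
  obtain ⟨S, hS, hnd⟩ := exists_eq_pow_rootMultiplicity_mul_and_not_dvd p hp e
  refine ⟨rootMultiplicity e p, S, hS, ?_, ?_⟩
  · intro h; exact hnd (dvd_iff_isRoot.2 h)
  · generalize rootMultiplicity e p = n at hS
    subst hS
    rcases n with _ | n
    · simp
    · simp only [derivative_mul, derivative_pow, derivative_sub, derivative_X, derivative_C]
      simp
      ring

theorem val_one {R G K : ℝ[X]} {e κ : ℝ}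
    (h : (X - C e) * G * derivative R = R * K) (hK : K.eval e = κ * G.eval e)
    (hG : G.eval e ≠ 0) (hκ : ∀ n : ℕ, κ ≠ n) : R = 0 := by
  by_contra hR
  obtain ⟨n, S, h1, h2, h3⟩ := root_decomp hR e
  have h4 : (X - C e) ^ n * (G * (C (n : ℝ) * S + (X - C e) * derivative S)) =
      (X - C e) ^ n * (S * K) := by
    calc _ = G * ((X - C e) * derivative R) := by rw [h3]; ring
      _ = R * K := by rw [← h]; ring
      _ = _ := by rw [h1]; ring
  have h5 := congrArg (eval e) (mul_left_cancel₀ (pow_ne_zero _ (X_sub_C_ne_zero e)) h4)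
  simp [hK] at h5
  apply hκ n
  have h6 : (κ - n) * (G.eval e * S.eval e) = 0 := by linarith
  have := (mul_eq_zero.1 h6).resolve_right (mul_ne_zero hG h2)
  linarith

theorem val_two {p q G T : ℝ[X]} {e t : ℝ} (hp : p ≠ 0) (hq : q ≠ 0)
    (h : (X - C e) * G * (p * derivative q - derivative p * q) + p * q * T = 0)
    (hT : T.eval e = t * G.eval e) (hG : G.eval e ≠ 0) (ht : ∀ n : ℤ, t ≠ n) : False := by
  obtain ⟨n, S, h1, h2, h3⟩ := root_decomp hp e
  obtain ⟨k, U, h1', h2', h3'⟩ := root_decomp hq e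
  have h4 : (X - C e) ^ (n + k) * (G * (S * (C (k : ℝ) * U + (X - C e) * derivative U)
      - U * (C (n : ℝ) * S + (X - C e) * derivative S)) + S * U * T) =
      (X - C e) ^ (n + k) * 0 := by
    rw [mul_zero]
    calc _ = G * (((X - C e) ^ n * S) * ((X - C e) ^ k * (C (k : ℝ) * U + (X - C e) * derivative U))
              - ((X - C e) ^ k * U) * ((X - C e) ^ n * (C (n : ℝ) * S + (X - C e) * derivative S)))
              + ((X - C e) ^ n * S) * ((X - C e) ^ k * U) * T := by ring
      _ = (X - C e) * G * (p * derivative q - derivative p * q) + p * q * T := by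
          rw [← h3, ← h3', ← h1, ← h1']; ring
      _ = 0 := h
  have h5 := congrArg (eval e) (mul_left_cancel₀ (pow_ne_zero _ (X_sub_C_ne_zero e)) h4)
  simp [hT] at h5
  apply ht ((n : ℤ) - k)
  have h6 : (t - (n - k)) * (G.eval e * (S.eval e * U.eval e)) = 0 := by linarith
  have := (mul_eq_zero.1 h6).resolve_right (mul_ne_zero hG (mul_ne_zero h2 h2'))
  push_cast
  linarith

end HeunAux
namespace HeunAux

theorem heunQE_eval (e1 e2 e3 a0 a1 a2 a3 E : ℝ) :
    (heunQE e1 e2 e3 a0 a1 a2 a3).eval E = e1 * (a2 + a3) ^ 2 + e2 * (a1 + a3) ^ 2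
      + e3 * (a1 + a2) ^ 2 - e3 * ((a0 + a1 + a2 + a3) * (-a0 + 1 / 2 + a1 + a2 + a3))
      - E / 4 := by
  simp [heunQE]
  ring

theorem rec_one (e1 e2 e3 a0 a1 a2 a3 E : ℝ) (hA : (e1 - e3) * (e2 - e3) ≠ 0)
    (hg : ∀ m : ℕ, (m : ℝ) + (2 * a3 + 1 / 2) ≠ 0) :
    (e1 - e3) * (e2 - e3) * (2 * a3 + 1 / 2) * (heunC e1 e2 e3 a0 a1 a2 a3 1).eval E
      = (heunQE e1 e2 e3 a0 a1 a2 a3).eval E := by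
  have h0 := hg 0
  rw [Nat.cast_zero, zero_add] at h0
  rw [heunC, eval_mul, eval_C, mul_inv_cancel_left₀ (mul_ne_zero hA h0)]

theorem rec_succ (e1 e2 e3 a0 a1 a2 a3 E : ℝ) (hA : (e1 - e3) * (e2 - e3) ≠ 0)
    (hg : ∀ m : ℕ, (m : ℝ) + (2 * a3 + 1 / 2) ≠ 0) (m : ℕ) :
    (e1 - e3) * (e2 - e3) * ((m : ℝ) + 2) * ((m : ℝ) + 1 + (2 * a3 + 1 / 2))
        * (heunC e1 e2 e3 a0 a1 a2 a3 (m + 2)).eval E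
      = -(((m : ℝ) + (a0 + a1 + a2 + a3)) * ((m : ℝ) + (-a0 + 1 / 2 + a1 + a2 + a3)))
          * (heunC e1 e2 e3 a0 a1 a2 a3 m).eval E
        + (((m : ℝ) + 1) * (((m : ℝ) + (2 * a3 + 1 / 2)) * (e1 + e2 - 2 * e3)
            + (e2 - e3) * (2 * a1 + 1 / 2) + (e1 - e3) * (2 * a2 + 1 / 2))
          + (heunQE e1 e2 e3 a0 a1 a2 a3).eval E) * (heunC e1 e2 e3 a0 a1 a2 a3 (m + 1)).eval E := by
  have h0 := hg (m + 1)
  push_cast at h0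
  have h2 : (m : ℝ) + 2 ≠ 0 := by positivity
  rw [heunC, eval_mul, eval_C, mul_inv_cancel_left₀ (mul_ne_zero (mul_ne_zero hA h2) h0)]
  simp only [eval_add, eval_mul, eval_C]

theorem heun_ode (e1 e2 e3 a0 a1 a2 a3 E : ℝ) (N : ℕ) (hA : (e1 - e3) * (e2 - e3) ≠ 0)
    (hg : ∀ m : ℕ, (m : ℝ) + (2 * a3 + 1 / 2) ≠ 0) (hN : a0 + a1 + a2 + a3 = -(N : ℝ))
    (hE : (heunC e1 e2 e3 a0 a1 a2 a3 (N + 1)).eval E = 0) :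
    ∃ Y : ℝ[X], Y ≠ 0 ∧ Y.natDegree ≤ N ∧
      hop (e1 - e3) (e2 - e3) (2 * a3 + 1 / 2) (2 * a1 + 1 / 2) (2 * a2 + 1 / 2)
        ((a0 + a1 + a2 + a3) * (-a0 + 1 / 2 + a1 + a2 + a3))
        ((heunQE e1 e2 e3 a0 a1 a2 a3).eval E) Y = 0 := by
  have hz : ∀ k : ℕ, (heunC e1 e2 e3 a0 a1 a2 a3 (N + 1 + k)).eval E = 0 ∧
      (heunC e1 e2 e3 a0 a1 a2 a3 (N + 1 + k + 1)).eval E = 0 := by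
    have hs : ∀ m : ℕ, (((m : ℝ) + (a0 + a1 + a2 + a3)) * (heunC e1 e2 e3 a0 a1 a2 a3 m).eval E = 0)
        → (heunC e1 e2 e3 a0 a1 a2 a3 (m + 1)).eval E = 0
        → (heunC e1 e2 e3 a0 a1 a2 a3 (m + 2)).eval E = 0 := by
      intro m h1 h2
      have h := rec_succ e1 e2 e3 a0 a1 a2 a3 E hA hg m
      have h0 := hg (m + 1)
      push_cast at h0
      have h3 : (m : ℝ) + 2 ≠ 0 := by positivity
      rw [h2] at h
      have h4 : (e1 - e3) * (e2 - e3) * ((m : ℝ) + 2) * ((m : ℝ) + 1 + (2 * a3 + 1 / 2))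
        * (heunC e1 e2 e3 a0 a1 a2 a3 (m + 2)).eval E = 0 := by
        rw [h]; linear_combination (-((m : ℝ) + (-a0 + 1 / 2 + a1 + a2 + a3))) * h1
      exact (mul_eq_zero.1 h4).resolve_left (mul_ne_zero (mul_ne_zero hA h3) h0)
    intro k
    induction k with
    | zero =>
      refine ⟨hE, hs N ?_ hE⟩
      rw [hN]; ring
    | succ k ih =>
      refine ⟨ih.2, hs (N + 1 + k) ?_ ih.2⟩
      rw [ih.1, mul_zero]
  have hz' : ∀ m, N < m → (heunC e1 e2 e3 a0 a1 a2 a3 m).eval E = 0 := by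
    intro m hm
    obtain ⟨k, rfl⟩ := Nat.exists_eq_add_of_le (show N + 1 ≤ m from hm)
    exact (hz k).1
  have hco : ∀ n, (∑ m ∈ Finset.range (N + 1),
      C ((heunC e1 e2 e3 a0 a1 a2 a3 m).eval E) * X ^ m : ℝ[X]).coeff n
        = (heunC e1 e2 e3 a0 a1 a2 a3 n).eval E := by
    intro n
    rw [finsetSum_coeff]
    simp only [coeff_C_mul_X_pow]
    rw [Finset.sum_ite_eq]
    split_ifs with h
    · rfl
    · rw [hz' n (by simpa using h)]
  refine ⟨∑ m ∈ Finset.range (N + 1), C ((heunC e1 e2 e3 a0 a1 a2 a3 m).eval E) * X ^ m,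
    ?_, ?_, ?_⟩
  · intro h
    have := hco 0
    rw [h] at this
    simp [heunC] at this
  · rw [natDegree_le_iff_coeff_eq_zero]
    intro m hm
    rw [hco, hz' m hm]
  · ext n
    rcases n with _ | m
    · rw [hop_coeff_zero, hco, hco]
      have := rec_one e1 e2 e3 a0 a1 a2 a3 E hA hg
      simp only [heunC, eval_one, coeff_zero] at this ⊢
      linear_combination this
    · rw [hop_coeff_succ, hco, hco, hco, coeff_zero]
      linear_combination rec_succ e1 e2 e3 a0 a1 a2 a3 E hA hg m

theorem ode_heun (e1 e2 e3 a0 a1 a2 a3 E : ℝ) (N : ℕ) (hA : (e1 - e3) * (e2 - e3) ≠ 0)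
    (hg : ∀ m : ℕ, (m : ℝ) + (2 * a3 + 1 / 2) ≠ 0)
    (Y : ℝ[X]) (hY : Y ≠ 0) (hd : Y.natDegree ≤ N)
    (h : hop (e1 - e3) (e2 - e3) (2 * a3 + 1 / 2) (2 * a1 + 1 / 2) (2 * a2 + 1 / 2)
        ((a0 + a1 + a2 + a3) * (-a0 + 1 / 2 + a1 + a2 + a3))
        ((heunQE e1 e2 e3 a0 a1 a2 a3).eval E) Y = 0) :
    (heunC e1 e2 e3 a0 a1 a2 a3 (N + 1)).eval E = 0 := by
  have key : ∀ m, Y.coeff m = Y.coeff 0 * (heunC e1 e2 e3 a0 a1 a2 a3 m).eval E ∧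
      Y.coeff (m + 1) = Y.coeff 0 * (heunC e1 e2 e3 a0 a1 a2 a3 (m + 1)).eval E := by
    intro m
    induction m with
    | zero =>
      refine ⟨by simp [heunC], ?_⟩
      have h1 := congrArg (fun p => coeff p 0) h
      simp only [hop_coeff_zero, coeff_zero] at h1
      have h2 := rec_one e1 e2 e3 a0 a1 a2 a3 E hA hg
      have h0 := hg 0
      rw [Nat.cast_zero, zero_add] at h0
      apply mul_left_cancel₀ (mul_ne_zero hA h0)
      rw [zero_add]
      linear_combination h1 - Y.coeff 0 * h2
    | succ m ih =>
      refine ⟨ih.2, ?_⟩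
      have h1 := congrArg (fun p => coeff p (m + 1)) h
      simp only [hop_coeff_succ, coeff_zero] at h1
      have h2 := rec_succ e1 e2 e3 a0 a1 a2 a3 E hA hg m
      have h0 := hg (m + 1)
      push_cast at h0
      have h3 : (m : ℝ) + 2 ≠ 0 := by positivity
      rw [ih.1, ih.2] at h1
      apply mul_left_cancel₀ (mul_ne_zero (mul_ne_zero hA h3) h0)
      linear_combination h1 - Y.coeff 0 * h2
  have h0 : Y.coeff 0 ≠ 0 := by
    intro h0
    apply hY
    ext m
    rw [(key m).1, h0, zero_mul, coeff_zero]
  have h1 : Y.coeff (N + 1) = 0 := coeff_eq_zero_of_natDegree_lt (by omega)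
  rw [(key N).2] at h1
  exact (mul_eq_zero.1 h1).resolve_left h0

theorem swap (u v g gu gv al be q : ℝ) (N : ℕ) (Y : ℝ[X]) (hY : Y ≠ 0) (hd : Y.natDegree ≤ N)
    (hs : g + gu + gv = al + be + 1)
    (h1 : ∀ m : ℕ, (m : ℝ) + g ≠ 0) (h2 : ∀ m : ℕ, (m : ℝ) + be ≠ 0)
    (h : hop u v g gu gv (al * be) q Y = 0) :
    ∃ Z : ℝ[X], Z ≠ 0 ∧ Z.natDegree ≤ N ∧
      hop u v be (gu + (g - be)) (gv + (g - be)) (al * g) q Z = 0 := by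
  set t : ℕ → ℝ := fun m => ∏ j ∈ Finset.range m, (((j : ℝ) + g) / ((j : ℝ) + be)) with ht
  have ht0 : ∀ m, t m ≠ 0 := fun m =>
    Finset.prod_ne_zero_iff.2 fun j _ => div_ne_zero (h1 j) (h2 j)
  have hts : ∀ m, t (m + 1) * ((m : ℝ) + be) = t m * ((m : ℝ) + g) := by
    intro m
    simp only [ht, Finset.prod_range_succ]
    rw [mul_assoc, div_mul_cancel₀ _ (h2 m)]
  have hco : ∀ n, (∑ m ∈ Finset.range (N + 1), C (t m * Y.coeff m) * X ^ m : ℝ[X]).coeff n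
        = t n * Y.coeff n := by
    intro n
    rw [finsetSum_coeff]
    simp only [coeff_C_mul_X_pow]
    rw [Finset.sum_ite_eq]
    split_ifs with h
    · rfl
    · rw [coeff_eq_zero_of_natDegree_lt (n := n), mul_zero]
      have : N < n := by simpa using h
      omega
  refine ⟨∑ m ∈ Finset.range (N + 1), C (t m * Y.coeff m) * X ^ m, ?_, ?_, ?_⟩
  · intro h
    apply hY
    ext n
    have := hco n
    rw [h, coeff_zero] at this
    exact (mul_eq_zero.1 this.symm).resolve_left (ht0 n)
  · rw [natDegree_le_iff_coeff_eq_zero]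
    intro m hm
    rw [hco, coeff_eq_zero_of_natDegree_lt (by omega), mul_zero]
  · ext n
    rcases n with _ | m
    · have h3 := congrArg (fun p => coeff p 0) h
      simp only [hop_coeff_zero, coeff_zero] at h3
      rw [hop_coeff_zero, hco, hco, coeff_zero]
      have h4 := hts 0
      rw [Nat.cast_zero, zero_add, zero_add, zero_add] at h4
      linear_combination t 0 * h3 + u * v * Y.coeff 1 * h4
    · have h3 := congrArg (fun p => coeff p (m + 1)) h
      simp only [hop_coeff_succ, coeff_zero] at h3
      rw [hop_coeff_succ, hco, hco, hco, coeff_zero]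
      have h4 := hts m
      have h5 := hts (m + 1)
      push_cast at h5
      have hgu : gu = al + be + 1 - g - gv := by linarith
      subst hgu
      linear_combination t (m + 1) * h3 + u * v * (m + 2) * Y.coeff (m + 2) * h5
        - (m + al) * Y.coeff m * h4

theorem transfer (e1 e2 e3 a0 a1 a2 a3 h E : ℝ) (N : ℕ) (hA : (e1 - e3) * (e2 - e3) ≠ 0)
    (hsum : e1 + e2 + e3 = 0)
    (hN : a0 + a1 + a2 + a3 = -(N : ℝ)) (hh : 2 * h = a1 + a3 - a0 - a2)
    (hg : ∀ m : ℕ, (m : ℝ) + (2 * a3 + 1 / 2) ≠ 0)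
    (hg2 : ∀ m : ℕ, (m : ℝ) + (2 * a2 + 1 / 2) ≠ 0)
    (hg3 : ∀ m : ℕ, (m : ℝ) + (2 * (a3 - h) + 1 / 2) ≠ 0)
    (hg4 : ∀ m : ℕ, (m : ℝ) + (2 * (a2 + h) + 1 / 2) ≠ 0)
    (hE : (heunC e1 e2 e3 (a0 + h) (a1 - h) (a2 + h) (a3 - h) (N + 1)).eval E = 0) :
    (heunC e1 e2 e3 a0 a1 a2 a3 (N + 1)).eval E = 0 := by
  obtain ⟨Y, hY, hd, ho⟩ := heun_ode e1 e2 e3 (a0 + h) (a1 - h) (a2 + h) (a3 - h) E N hA hg3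
    (by linarith) hE
  have ho2 := congrArg (fun p => p.comp (X + C (e2 - e3))) ho
  simp only [hop_shift, zero_comp] at ho2
  have hY2 : Y.comp (X + C (e2 - e3)) ≠ 0 := by
    rwa [Ne, comp_X_add_C_eq_zero_iff]
  have hbe : -(a0 + h) + 1 / 2 + (a1 - h) + (a2 + h) + (a3 - h) = 2 * a2 + 1 / 2 := by linarith
  rw [hbe] at ho2
  obtain ⟨Z, hZ, hZd, hZo⟩ := swap _ _ _ _ _ _ _ _ N _ hY2
    (by rw [natDegree_comp, natDegree_X_add_C, mul_one]; exact hd) (by linarith) hg4 hg2 ho2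
  have ho3 := congrArg (fun p => p.comp (X + C (-(e2 - e3)))) hZo
  simp only [hop_shift, zero_comp] at ho3
  refine ode_heun e1 e2 e3 a0 a1 a2 a3 E N hA hg (Z.comp (X + C (-(e2 - e3)))) ?_ ?_ ?_
  · rwa [Ne, comp_X_add_C_eq_zero_iff]
  · rw [natDegree_comp, natDegree_X_add_C, mul_one]; exact hZd
  · rw [← ho3]
    have he : e3 = -e1 - e2 := by linarith
    have ha : h = (a1 + a3 - a0 - a2) / 2 := by linarith
    simp only [heunQE_eval]
    subst he ha
    congr 1 <;> ring

end HeunAux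
namespace HeunAux

theorem half_ne {a : ℝ} {n : ℤ} (h : 2 * a = n) (m : ℕ) : (m : ℝ) + (2 * a + 1 / 2) ≠ 0 := by
  intro h0
  rw [h] at h0
  have h1 : ((2 * (m : ℤ) + 2 * n + 1 : ℤ) : ℝ) = 0 := by push_cast; linarith
  have h2 : 2 * (m : ℤ) + 2 * n + 1 = 0 := by exact_mod_cast h1
  omega

theorem half_ne_int {a : ℝ} {n : ℤ} (h : 2 * a = n) (m : ℤ) : 1 / 2 - 2 * a ≠ (m : ℝ) := by
  intro h0
  rw [h] at h0
  have h1 : ((2 * m + 2 * n - 1 : ℤ) : ℝ) = 0 := by push_cast; linarith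
  have h2 : 2 * m + 2 * n - 1 = 0 := by exact_mod_cast h1
  omega

theorem heunC_symm (e1 e2 e3 a0 a1 a2 a3 : ℝ) (m : ℕ) :
    heunC e1 e2 e3 a0 a1 a2 a3 m = heunC e2 e1 e3 a0 a2 a1 a3 m := by
  have hq : heunQE e1 e2 e3 a0 a1 a2 a3 = heunQE e2 e1 e3 a0 a2 a1 a3 := by
    unfold heunQE
    congr 2
    ring
  have key : ∀ m, heunC e1 e2 e3 a0 a1 a2 a3 m = heunC e2 e1 e3 a0 a2 a1 a3 m ∧
      heunC e1 e2 e3 a0 a1 a2 a3 (m + 1) = heunC e2 e1 e3 a0 a2 a1 a3 (m + 1) := by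
    intro m
    induction m with
    | zero =>
      refine ⟨by simp [heunC], ?_⟩
      rw [zero_add, heunC, heunC, hq, mul_comm (e1 - e3)]
    | succ m ih =>
      refine ⟨ih.2, ?_⟩
      rw [heunC, heunC, hq, ih.1, ih.2, mul_comm (e1 - e3) (e2 - e3)]
      congr 2
      · congr 3
        ring
      · congr 3
        ring
  exact (key m).1

section
variable (e1 e2 e3 a0 a1 a2 a3 : ℝ)

/-- slope coefficients -/
noncomputable def sS (m : ℕ) : ℝ :=
  -(1 / 4) * ((e1 - e3) * (e2 - e3) * ((m : ℝ) + 1) * ((m : ℝ) + (2 * a3 + 1 / 2)))⁻¹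

/-- constant coefficients -/
noncomputable def bB (m : ℕ) : ℝ :=
  ((e1 - e3) * (e2 - e3) * ((m : ℝ) + 1) * ((m : ℝ) + (2 * a3 + 1 / 2)))⁻¹ *
    ((m : ℝ) * (((m : ℝ) - 1 + (2 * a3 + 1 / 2)) * (e1 + e2 - 2 * e3)
                + (e2 - e3) * (2 * a1 + 1 / 2) + (e1 - e3) * (2 * a2 + 1 / 2))
     + (e1 * (a2 + a3) ^ 2 + e2 * (a1 + a3) ^ 2 + e3 * (a1 + a2) ^ 2
      - e3 * ((a0 + a1 + a2 + a3) * (-a0 + 1 / 2 + a1 + a2 + a3))))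

/-- lower coefficients -/
noncomputable def dD (m : ℕ) : ℝ :=
  ((e1 - e3) * (e2 - e3) * ((m : ℝ) + 2) * ((m : ℝ) + 1 + (2 * a3 + 1 / 2)))⁻¹ *
    (((m : ℝ) + (a0 + a1 + a2 + a3)) * ((m : ℝ) + (-a0 + 1 / 2 + a1 + a2 + a3)))

theorem std_one : heunC e1 e2 e3 a0 a1 a2 a3 1 =
    C (sS e1 e2 e3 a3 0) * X + C (bB e1 e2 e3 a0 a1 a2 a3 0) := by
  rw [heunC, sS, bB, heunQE]
  simp only [Nat.cast_zero, zero_add, zero_mul, mul_one, C_mul, C_neg]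
  ring

theorem std_rec (m : ℕ) : heunC e1 e2 e3 a0 a1 a2 a3 (m + 2) =
    (C (sS e1 e2 e3 a3 (m + 1)) * X + C (bB e1 e2 e3 a0 a1 a2 a3 (m + 1)))
      * heunC e1 e2 e3 a0 a1 a2 a3 (m + 1)
      - C (dD e1 e2 e3 a0 a1 a2 a3 m) * heunC e1 e2 e3 a0 a1 a2 a3 m := by
  have h1 : (((m + 1 : ℕ) : ℝ) + 1) = (m : ℝ) + 2 := by push_cast; ring
  have h2 : ((m + 1 : ℕ) : ℝ) - 1 = (m : ℝ) := by push_cast; ring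
  rw [heunC, sS, bB, dD, heunQE, h1, h2]
  push_cast
  generalize ((e1 - e3) * (e2 - e3) * ((m : ℝ) + 2) * ((m : ℝ) + 1 + (2 * a3 + 1 / 2)))⁻¹ = w
  generalize ((m : ℝ) + (a0 + a1 + a2 + a3)) * ((m : ℝ) + (-a0 + 1 / 2 + a1 + a2 + a3)) = w2
  simp only [C_mul, C_neg, C_add]
  ring

theorem sS_ne (hA : (e1 - e3) * (e2 - e3) ≠ 0)
    (hg : ∀ m : ℕ, (m : ℝ) + (2 * a3 + 1 / 2) ≠ 0) (m : ℕ) : sS e1 e2 e3 a3 m ≠ 0 := by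
  have h1 : (m : ℝ) + 1 ≠ 0 := by positivity
  exact mul_ne_zero (by norm_num) (inv_ne_zero (mul_ne_zero (mul_ne_zero hA h1) (hg m)))

theorem natDegree_heunC (hA : (e1 - e3) * (e2 - e3) ≠ 0)
    (hg : ∀ m : ℕ, (m : ℝ) + (2 * a3 + 1 / 2) ≠ 0) (N : ℕ) :
    (heunC e1 e2 e3 a0 a1 a2 a3 N).natDegree = N := by
  obtain ⟨h1, h2, -, -⟩ := sturm_aux (heunC e1 e2 e3 a0 a1 a2 a3) _ _ _ N (by rw [heunC])
    (std_one ..) (fun m _ => std_rec e1 e2 e3 a0 a1 a2 a3 m)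
    (fun m _ => sS_ne e1 e2 e3 a3 hA hg m) N le_rfl
  exact le_antisymm h1 (le_natDegree_of_ne_zero h2)

theorem heun_sturm (N : ℕ) (hA : (e1 - e3) * (e2 - e3) < 0)
    (hg : ∀ m : ℕ, (m : ℝ) + (2 * a3 + 1 / 2) ≠ 0)
    (hN : a0 + a1 + a2 + a3 = -(N : ℝ))
    (hpos : ∀ m : ℕ, m < N → 0 < ((m : ℝ) + (2 * a3 + 1 / 2)) *
      ((m : ℝ) + (-a0 + 1 / 2 + a1 + a2 + a3))) :
    Good (heunC e1 e2 e3 a0 a1 a2 a3 (N + 1)) := by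
  refine sturm (heunC e1 e2 e3 a0 a1 a2 a3) _ _ _ N (by rw [heunC])
    (std_one ..) (fun m _ => std_rec e1 e2 e3 a0 a1 a2 a3 m)
    (fun m _ => sS_ne e1 e2 e3 a3 hA.ne hg m) ?_
  intro m hm
  have hp := hpos m hm
  have hm' : (m : ℝ) - N < 0 := by
    have : (m : ℝ) < N := by exact_mod_cast hm
    linarith
  have h0 := hg m
  have h1 := hg (m + 1)
  push_cast at h1
  rw [dD, sS, sS, hN]
  push_cast
  set A := (e1 - e3) * (e2 - e3)
  set g := (m : ℝ) + (2 * a3 + 1 / 2)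
  set g' := (m : ℝ) + 1 + (2 * a3 + 1 / 2)
  set B := (m : ℝ) + (-a0 + 1 / 2 + a1 + a2 + a3)
  have hm2 : (m : ℝ) + 2 > 0 := by positivity
  have hm1 : (m : ℝ) + 1 > 0 := by positivity
  have hA0 : A ≠ 0 := hA.ne
  have e : (A * ((m : ℝ) + 2) * g')⁻¹ * (((m : ℝ) + -(N : ℝ)) * B) *
      (-(1 / 4) * (A * ((m : ℝ) + 1) * g)⁻¹) * (-(1 / 4) * (A * ((m : ℝ) + 1 + 1) * g')⁻¹)
      = (-A) * (-((m : ℝ) - N)) * (g * B) *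
        (16 * A ^ 2 * (m + 1) * g ^ 2 * (A * (m + 2) * g') ^ 2)⁻¹ := by
    have : (m : ℝ) + 1 + 1 = m + 2 := by ring
    rw [this]
    field_simp
    ring
  rw [e]
  have h2 : 0 < -A := by linarith
  have h3 : 0 < -((m : ℝ) - N) := by linarith
  positivity

end

theorem good_swap (e1 e2 e3 : ℝ) (l0 l1 n l3 : ℕ) (hl : l0 + l3 = l1 + n)
    (hA : (e1 - e3) * (e2 - e3) < 0) (hsum : e1 + e2 + e3 = 0) :
    Good (heunC e1 e2 e3 (-(l0 : ℝ) / 2) (((l1 : ℝ) + 1) / 2) (-((n + 1 : ℕ) : ℝ) / 2)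
      (-(l3 : ℝ) / 2) (n + 1)) := by
  have hlr : (l0 : ℝ) + l3 = l1 + n := by exact_mod_cast hl
  have hg : ∀ m : ℕ, (m : ℝ) + (2 * (-(l3 : ℝ) / 2) + 1 / 2) ≠ 0 :=
    half_ne (n := -(l3 : ℤ)) (by push_cast; ring)
  have hg2 : ∀ m : ℕ, (m : ℝ) + (2 * (-((n + 1 : ℕ) : ℝ) / 2) + 1 / 2) ≠ 0 :=
    half_ne (n := -((n : ℤ) + 1)) (by push_cast; ring)
  have hg3 : ∀ m : ℕ, (m : ℝ) + (2 * (-(l3 : ℝ) / 2 - ((l0 : ℝ) + 1) / 2) + 1 / 2) ≠ 0 :=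
    half_ne (n := -(l3 : ℤ) - l0 - 1) (by push_cast; ring)
  have hg4 : ∀ m : ℕ, (m : ℝ) + (2 * (-((n + 1 : ℕ) : ℝ) / 2 + ((l0 : ℝ) + 1) / 2) + 1 / 2) ≠ 0 :=
    half_ne (n := -(n : ℤ) + l0) (by push_cast; ring)
  have hgood : Good (heunC e1 e2 e3 (-(l0 : ℝ) / 2 + ((l0 : ℝ) + 1) / 2)
      (((l1 : ℝ) + 1) / 2 - ((l0 : ℝ) + 1) / 2) (-((n + 1 : ℕ) : ℝ) / 2 + ((l0 : ℝ) + 1) / 2)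
      (-(l3 : ℝ) / 2 - ((l0 : ℝ) + 1) / 2) (n + 1)) := by
    refine heun_sturm _ _ _ _ _ _ _ n hA hg3 (by push_cast; linarith) ?_
    intro m hm
    have hm' : (m : ℝ) + 1 ≤ n := by exact_mod_cast hm
    have : (0 : ℝ) ≤ l1 := by positivity
    apply mul_pos_of_neg_of_neg
    · linarith
    · push_cast; linarith
  obtain ⟨-, s, hs, hr⟩ := hgood
  rw [natDegree_heunC _ _ _ _ _ _ _ hA.ne hg3] at hs
  refine ⟨?_, s, ?_, ?_⟩
  · intro h
    have := natDegree_heunC e1 e2 e3 (-(l0 : ℝ) / 2) (((l1 : ℝ) + 1) / 2) (-((n + 1 : ℕ) : ℝ) / 2)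
      (-(l3 : ℝ) / 2) hA.ne hg (n + 1)
    rw [h] at this
    simp at this
  · rw [hs, natDegree_heunC _ _ _ _ _ _ _ hA.ne hg]
  · intro x hx
    exact transfer e1 e2 e3 _ _ _ _ (((l0 : ℝ) + 1) / 2) x n hA.ne hsum
      (by push_cast; linarith) (by push_cast; linarith) hg hg2 hg3 hg4 (hr x hx)

/-- Weighted combination of the products of two of the three linear factors. -/
noncomputable def tri (u v c0 cu cv : ℝ) : ℝ[X] :=
  C c0 * (X - C u) * (X - C v) + C cu * X * (X - C v) + C cv * X * (X - C u)

theorem wronskian (u v t0 tu tv k0 ku kv ka qa kb qb : ℝ) (p q : ℝ[X])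
    (hV : X * (X - C u) * (X - C v) * ((C ka * X - C qa) - (C kb * X - C qb)
      + derivative (tri u v t0 tu tv)) = tri u v t0 tu tv * tri u v k0 ku kv)
    (hp : hop u v (1 - t0 - k0) (1 - tu - ku) (1 - tv - kv) ka qa p = 0)
    (hq : hop u v (1 + t0 - k0) (1 + tu - ku) (1 + tv - kv) kb qb q = 0) :
    X * (X - C u) * (X - C v) * derivative
      (X * (X - C u) * (X - C v) * (p * derivative q - derivative p * q) + p * q * tri u v t0 tu tv)
    = (X * (X - C u) * (X - C v) * (p * derivative q - derivative p * q)
        + p * q * tri u v t0 tu tv) * tri u v k0 ku kv := by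
  simp only [hop, tri, derivative_mul, derivative_add, derivative_sub, derivative_X, derivative_C,
    C_sub, C_add, C_1] at *
  linear_combination (X * (X - C u) * (X - C v)) * (p * hq - q * hp) + p * q * hV

theorem no_common (e1 e2 e3 a0 a1 a2 a3 b0 b1 b2 b3 E : ℝ) (N M : ℕ)
    (hu : e1 - e3 ≠ 0) (hv : e2 - e3 ≠ 0) (huv : e1 - e3 ≠ e2 - e3) (hsum : e1 + e2 + e3 = 0)
    (n1 n2 n3 : ℤ) (h1 : 2 * a1 = n1) (h2 : 2 * a2 = n2) (h3 : 2 * a3 = n3)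
    (c0 : b0 = a0 ∨ b0 = 1 / 2 - a0) (c1 : b1 = a1 ∨ b1 = 1 / 2 - a1)
    (c2 : b2 = a2 ∨ b2 = 1 / 2 - a2) (c3 : b3 = a3 ∨ b3 = 1 / 2 - a3)
    (hsame : b1 = a1 ∨ b2 = a2 ∨ b3 = a3)
    (hdiff : b1 = 1 / 2 - a1 ∨ b2 = 1 / 2 - a2 ∨ b3 = 1 / 2 - a3)
    (hN : a0 + a1 + a2 + a3 = -(N : ℝ)) (hM : b0 + b1 + b2 + b3 = -(M : ℝ))
    (hp : (heunC e1 e2 e3 a0 a1 a2 a3 (N + 1)).eval E = 0)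
    (hq : (heunC e1 e2 e3 b0 b1 b2 b3 (M + 1)).eval E = 0) : False := by
  have h12 : e1 ≠ e2 := fun h => huv (by rw [h])
  have hga := half_ne h3
  have hgb : ∀ m : ℕ, (m : ℝ) + (2 * b3 + 1 / 2) ≠ 0 := by
    rcases c3 with rfl | rfl
    · exact hga
    · exact half_ne (n := 1 - n3) (by push_cast; linarith)
  obtain ⟨p, hp0, -, hpo⟩ := heun_ode _ _ _ _ _ _ _ _ N (mul_ne_zero hu hv) hga hN hp
  obtain ⟨q, hq0, -, hqo⟩ := heun_ode _ _ _ _ _ _ _ _ M (mul_ne_zero hu hv) hgb hM hq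
  have hW := wronskian (e1 - e3) (e2 - e3) (b3 - a3) (b1 - a1) (b2 - a2)
    (1 / 2 - a3 - b3) (1 / 2 - a1 - b1) (1 / 2 - a2 - b2) _ _ _ _ p q ?_
    (by rw [← hpo]; congr 1 <;> ring) (by rw [← hqo]; congr 1 <;> ring)
  · have hR : X * (X - C (e1 - e3)) * (X - C (e2 - e3)) * (p * derivative q - derivative p * q)
        + p * q * tri (e1 - e3) (e2 - e3) (b3 - a3) (b1 - a1) (b2 - a2) = 0 := by
      rcases hsame with h | h | h
      · refine val_one (e := e1 - e3) (κ := 1 / 2 - a1 - b1) (G := X * (X - C (e2 - e3)))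
          (K := _) ((Eq.trans (by ring) hW)) ?_ ?_ ?_
        · simp [tri]
          ring
        · simpa using ⟨hu, sub_ne_zero.2 h12⟩
        · intro n
          rw [h]
          have := half_ne_int h1 n
          push_cast at this
          intro h'
          exact this (by linarith)
      · refine val_one (e := e2 - e3) (κ := 1 / 2 - a2 - b2) (G := X * (X - C (e1 - e3)))
          (K := _) ((Eq.trans (by ring) hW)) ?_ ?_ ?_
        · simp [tri]
          ring
        · simpa using ⟨hv, sub_ne_zero.2 h12.symm⟩
        · intro n
          rw [h]
          have := half_ne_int h2 n
          push_cast at this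
          intro h'
          exact this (by linarith)
      · refine val_one (e := 0) (κ := 1 / 2 - a3 - b3) (G := (X - C (e1 - e3)) * (X - C (e2 - e3)))
          (K := _) ((Eq.trans (by rw [C_0]; ring) hW)) ?_ ?_ ?_
        · simp [tri]
          ring
        · have := mul_ne_zero (neg_ne_zero.2 hu) (neg_ne_zero.2 hv)
          simpa [sub_eq_zero, eq_comm] using this
        · intro n
          rw [h]
          have := half_ne_int h3 n
          push_cast at this
          intro h'
          exact this (by linarith)
    rcases hdiff with h | h | h
    · refine val_two (T := tri (e1 - e3) (e2 - e3) (b3 - a3) (b1 - a1) (b2 - a2)) (e := e1 - e3) (t := b1 - a1) (G := X * (X - C (e2 - e3))) hp0 hq0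
        (Eq.trans (by ring) hR) ?_ ?_ ?_
      · simp [tri]
        ring
      · simpa using ⟨hu, sub_ne_zero.2 h12⟩
      · intro n
        rw [h]
        have := half_ne_int h1 n
        intro h'
        exact this (by linarith)
    · refine val_two (T := tri (e1 - e3) (e2 - e3) (b3 - a3) (b1 - a1) (b2 - a2)) (e := e2 - e3) (t := b2 - a2) (G := X * (X - C (e1 - e3))) hp0 hq0
        (Eq.trans (by ring) hR) ?_ ?_ ?_
      · simp [tri]
        ring
      · simpa using ⟨hv, sub_ne_zero.2 h12.symm⟩
      · intro n
        rw [h]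
        have := half_ne_int h2 n
        intro h'
        exact this (by linarith)
    · refine val_two (T := tri (e1 - e3) (e2 - e3) (b3 - a3) (b1 - a1) (b2 - a2)) (e := 0) (t := b3 - a3) (G := (X - C (e1 - e3)) * (X - C (e2 - e3))) hp0 hq0
        (Eq.trans (by rw [C_0]; ring) hR) ?_ ?_ ?_
      · simp [tri]
        ring
      · have := mul_ne_zero (neg_ne_zero.2 hu) (neg_ne_zero.2 hv)
        simpa [sub_eq_zero, eq_comm] using this
      · intro n
        rw [h]
        have := half_ne_int h3 n
        intro h'
        exact this (by linarith)
  · have he : e3 = -e1 - e2 := by linarith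
    clear hpo hqo hp hq hga hgb hN hM hsame hdiff
    apply Polynomial.funext
    intro x
    simp only [tri, heunQE_eval, derivative_mul, derivative_add, derivative_sub, derivative_X,
      derivative_C, eval_add, eval_mul, eval_sub, eval_X, eval_C, eval_zero, eval_one]
    subst he
    rcases c0 with rfl | rfl <;> rcases c1 with rfl | rfl <;> rcases c2 with rfl | rfl <;>
      rcases c3 with rfl | rfl <;> ring

end HeunAux

namespace HeunAux
open Polynomial

theorem good_specP {e1 e2 e3 a0 a1 a2 a3 : ℝ} {N : ℕ}
    (h : Good (heunC e1 e2 e3 a0 a1 a2 a3 (N + 1))) :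
    Good (specP e1 e2 e3 a0 a1 a2 a3 N) :=
  h.C_mul (inv_ne_zero (leadingCoeff_ne_zero.2 h.1))

theorem root_specP {e1 e2 e3 a0 a1 a2 a3 : ℝ} {N : ℕ} {x : ℝ}
    (h : Good (heunC e1 e2 e3 a0 a1 a2 a3 (N + 1)))
    (hx : (specP e1 e2 e3 a0 a1 a2 a3 N).eval x = 0) :
    (heunC e1 e2 e3 a0 a1 a2 a3 (N + 1)).eval x = 0 := by
  unfold specP at hx
  rw [eval_mul, eval_C] at hx
  exact (mul_eq_zero.1 hx).resolve_left (inv_ne_zero (leadingCoeff_ne_zero.2 h.1))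

end HeunAux

/-- If `l0 + l3 + 1 = l1 + l2`, `l2 + l3 ≥ l0 + l1 + 1` and
`l1 + l3 ≥ l0 + l2 + 1`, with `e1 > e3 > e2` and `e1+e2+e3 = 0` (purely imaginary modulus),
then all zeros of the spectral polynomial `Q^{(l0,l1,l2,l3)}` are real and unequal. -/
theorem specQ_real_distinct_roots_case2
    (l0 l1 l2 l3 : ℕ) (hl : l0 + l3 + 1 = l1 + l2)
    (hl1 : l0 + l1 + 1 ≤ l2 + l3) (hl2 : l0 + l2 + 1 ≤ l1 + l3)
    (e1 e2 e3 : ℝ) (h13 : e3 < e1) (h32 : e2 < e3) (hsum : e1 + e2 + e3 = 0) :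
    (specQ e1 e2 e3 l0 l1 l2 l3).map (algebraMap ℝ ℂ) ≠ 0 ∧
    ((specQ e1 e2 e3 l0 l1 l2 l3).map (algebraMap ℝ ℂ)).roots.Nodup ∧
    ∀ z ∈ ((specQ e1 e2 e3 l0 l1 l2 l3).map (algebraMap ℝ ℂ)).roots, z.im = 0 := by
  obtain ⟨n, rfl⟩ : ∃ n, l2 = n + 1 := ⟨l2 - 1, by omega⟩
  obtain ⟨k, rfl⟩ : ∃ k, l1 = k + 1 := ⟨l1 - 1, by omega⟩
  have hA : (e1 - e3) * (e2 - e3) < 0 := mul_neg_of_pos_of_neg (by linarith) (by linarith)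
  have hu : e1 - e3 ≠ 0 := ne_of_gt (by linarith)
  have hv : e2 - e3 ≠ 0 := ne_of_lt (by linarith)
  have huv : e1 - e3 ≠ e2 - e3 := ne_of_gt (by linarith)
  have hlr : (l0 : ℝ) + l3 = k + n + 1 := by
    have : l0 + l3 = k + n + 1 := by omega
    exact_mod_cast this
  have E0 : specP0 e1 e2 e3 l0 (k + 1) (n + 1) l3 =
      specP e1 e2 e3 (((l0 : ℝ) + 1) / 2) (-((k + 1 : ℕ) : ℝ) / 2) (-((n + 1 : ℕ) : ℝ) / 2)
        (-(l3 : ℝ) / 2) l3 := by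
    unfold specP0
    rw [if_neg (by omega), if_neg (by omega), if_neg (by omega)]
    congr 1
    omega
  have E1 : specP1 e1 e2 e3 l0 (k + 1) (n + 1) l3 =
      specP e1 e2 e3 (-(l0 : ℝ) / 2) ((((k + 1 : ℕ) : ℝ) + 1) / 2) (-((n + 1 : ℕ) : ℝ) / 2)
        (-(l3 : ℝ) / 2) n := by
    unfold specP1
    rw [if_neg (by omega), if_neg (by omega), if_neg (by omega)]
    congr 1
    omega
  have E2 : specP2 e1 e2 e3 l0 (k + 1) (n + 1) l3 =
      specP e1 e2 e3 (-(l0 : ℝ) / 2) (-((k + 1 : ℕ) : ℝ) / 2) ((((n + 1 : ℕ) : ℝ) + 1) / 2)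
        (-(l3 : ℝ) / 2) k := by
    unfold specP2
    rw [if_neg (by omega), if_neg (by omega), if_neg (by omega)]
    congr 1
    omega
  have E3 : specP3 e1 e2 e3 l0 (k + 1) (n + 1) l3 =
      specP e1 e2 e3 (-(l0 : ℝ) / 2) (-((k + 1 : ℕ) : ℝ) / 2) (-((n + 1 : ℕ) : ℝ) / 2)
        (((l3 : ℝ) + 1) / 2) l0 := by
    unfold specP3
    rw [if_neg (by omega), if_neg (by omega), if_neg (by omega)]
    congr 1
    omega
  have G0 : HeunAux.Good (heunC e1 e2 e3 (((l0 : ℝ) + 1) / 2) (-((k + 1 : ℕ) : ℝ) / 2)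
      (-((n + 1 : ℕ) : ℝ) / 2) (-(l3 : ℝ) / 2) (l3 + 1)) := by
    refine HeunAux.heun_sturm _ _ _ _ _ _ _ l3 hA
      (HeunAux.half_ne (n := -(l3 : ℤ)) (by push_cast; ring)) (by push_cast; linarith) ?_
    intro m hm
    have hm' : (m : ℝ) + 1 ≤ l3 := by exact_mod_cast hm
    have h0 : (0 : ℝ) ≤ l0 := Nat.cast_nonneg _
    apply mul_pos_of_neg_of_neg
    · linarith
    · push_cast
      linarith
  have G1 := HeunAux.good_swap e1 e2 e3 l0 (k + 1) n l3 (by omega) hA hsum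
  have G2 := HeunAux.good_swap e2 e1 e3 l0 (n + 1) k l3 (by omega)
    (by rw [mul_comm]; exact hA) (by linarith)
  rw [← HeunAux.heunC_symm] at G2
  have G3 : HeunAux.Good (heunC e1 e2 e3 (-(l0 : ℝ) / 2) (-((k + 1 : ℕ) : ℝ) / 2)
      (-((n + 1 : ℕ) : ℝ) / 2) (((l3 : ℝ) + 1) / 2) (l0 + 1)) := by
    refine HeunAux.heun_sturm _ _ _ _ _ _ _ l0 hA
      (HeunAux.half_ne (n := (l3 : ℤ) + 1) (by push_cast; ring)) (by push_cast; linarith) ?_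
    intro m hm
    have hm' : (0 : ℝ) ≤ m := Nat.cast_nonneg _
    have h0 : (0 : ℝ) ≤ l3 := Nat.cast_nonneg _
    apply mul_pos
    · linarith
    · push_cast
      linarith
  have hk : 2 * (-((k + 1 : ℕ) : ℝ) / 2) = ((-((k : ℤ) + 1) : ℤ) : ℝ) := by push_cast; ring
  have hn : 2 * (-((n + 1 : ℕ) : ℝ) / 2) = ((-((n : ℤ) + 1) : ℤ) : ℝ) := by push_cast; ring
  have h3 : 2 * (-(l3 : ℝ) / 2) = ((-(l3 : ℤ) : ℤ) : ℝ) := by push_cast; ring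
  have hk' : 2 * ((((k + 1 : ℕ) : ℝ) + 1) / 2) = (((k : ℤ) + 2 : ℤ) : ℝ) := by push_cast; ring
  have hn' : 2 * ((((n + 1 : ℕ) : ℝ) + 1) / 2) = (((n : ℤ) + 2 : ℤ) : ℝ) := by push_cast; ring
  unfold specQ
  rw [E0, E1, E2, E3]
  apply HeunAux.Good.final
  have D01 : ∀ x, (specP e1 e2 e3 (((l0 : ℝ) + 1) / 2) (-((k + 1 : ℕ) : ℝ) / 2)
      (-((n + 1 : ℕ) : ℝ) / 2) (-(l3 : ℝ) / 2) l3).eval x = 0 →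
      (specP e1 e2 e3 (-(l0 : ℝ) / 2) ((((k + 1 : ℕ) : ℝ) + 1) / 2) (-((n + 1 : ℕ) : ℝ) / 2)
        (-(l3 : ℝ) / 2) n).eval x = 0 → False := by
    intro x hx hy
    exact HeunAux.no_common _ _ _ _ _ _ _ _ _ _ _ x l3 n hu hv huv hsum _ _ _ hk hn h3
      (Or.inr (by ring)) (Or.inr (by ring)) (Or.inl rfl) (Or.inl rfl)
      (Or.inr (Or.inr rfl)) (Or.inl (by ring)) (by push_cast; linarith) (by push_cast; linarith)
      (HeunAux.root_specP G0 hx) (HeunAux.root_specP G1 hy)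
  have D02 : ∀ x, (specP e1 e2 e3 (((l0 : ℝ) + 1) / 2) (-((k + 1 : ℕ) : ℝ) / 2)
      (-((n + 1 : ℕ) : ℝ) / 2) (-(l3 : ℝ) / 2) l3).eval x = 0 →
      (specP e1 e2 e3 (-(l0 : ℝ) / 2) (-((k + 1 : ℕ) : ℝ) / 2) ((((n + 1 : ℕ) : ℝ) + 1) / 2)
        (-(l3 : ℝ) / 2) k).eval x = 0 → False := by
    intro x hx hy
    exact HeunAux.no_common _ _ _ _ _ _ _ _ _ _ _ x l3 k hu hv huv hsum _ _ _ hk hn h3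
      (Or.inr (by ring)) (Or.inl rfl) (Or.inr (by ring)) (Or.inl rfl)
      (Or.inr (Or.inr rfl)) (Or.inr (Or.inl (by ring))) (by push_cast; linarith)
      (by push_cast; linarith)
      (HeunAux.root_specP G0 hx) (HeunAux.root_specP G2 hy)
  have D12 : ∀ x, (specP e1 e2 e3 (-(l0 : ℝ) / 2) ((((k + 1 : ℕ) : ℝ) + 1) / 2)
      (-((n + 1 : ℕ) : ℝ) / 2) (-(l3 : ℝ) / 2) n).eval x = 0 →
      (specP e1 e2 e3 (-(l0 : ℝ) / 2) (-((k + 1 : ℕ) : ℝ) / 2) ((((n + 1 : ℕ) : ℝ) + 1) / 2)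
        (-(l3 : ℝ) / 2) k).eval x = 0 → False := by
    intro x hx hy
    exact HeunAux.no_common _ _ _ _ _ _ _ _ _ _ _ x n k hu hv huv hsum _ _ _ hk' hn h3
      (Or.inl rfl) (Or.inr (by ring)) (Or.inr (by ring)) (Or.inl rfl)
      (Or.inr (Or.inr rfl)) (Or.inl (by ring)) (by push_cast; linarith)
      (by push_cast; linarith)
      (HeunAux.root_specP G1 hx) (HeunAux.root_specP G2 hy)
  have D03 : ∀ x, (specP e1 e2 e3 (((l0 : ℝ) + 1) / 2) (-((k + 1 : ℕ) : ℝ) / 2)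
      (-((n + 1 : ℕ) : ℝ) / 2) (-(l3 : ℝ) / 2) l3).eval x = 0 →
      (specP e1 e2 e3 (-(l0 : ℝ) / 2) (-((k + 1 : ℕ) : ℝ) / 2) (-((n + 1 : ℕ) : ℝ) / 2)
        (((l3 : ℝ) + 1) / 2) l0).eval x = 0 → False := by
    intro x hx hy
    exact HeunAux.no_common _ _ _ _ _ _ _ _ _ _ _ x l3 l0 hu hv huv hsum _ _ _ hk hn h3
      (Or.inr (by ring)) (Or.inl rfl) (Or.inl rfl) (Or.inr (by ring))
      (Or.inl rfl) (Or.inr (Or.inr (by ring))) (by push_cast; linarith)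
      (by push_cast; linarith)
      (HeunAux.root_specP G0 hx) (HeunAux.root_specP G3 hy)
  have D13 : ∀ x, (specP e1 e2 e3 (-(l0 : ℝ) / 2) ((((k + 1 : ℕ) : ℝ) + 1) / 2)
      (-((n + 1 : ℕ) : ℝ) / 2) (-(l3 : ℝ) / 2) n).eval x = 0 →
      (specP e1 e2 e3 (-(l0 : ℝ) / 2) (-((k + 1 : ℕ) : ℝ) / 2) (-((n + 1 : ℕ) : ℝ) / 2)
        (((l3 : ℝ) + 1) / 2) l0).eval x = 0 → False := by
    intro x hx hy
    exact HeunAux.no_common _ _ _ _ _ _ _ _ _ _ _ x n l0 hu hv huv hsum _ _ _ hk' hn h3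
      (Or.inl rfl) (Or.inr (by ring)) (Or.inl rfl) (Or.inr (by ring))
      (Or.inr (Or.inl rfl)) (Or.inr (Or.inr (by ring))) (by push_cast; linarith)
      (by push_cast; linarith)
      (HeunAux.root_specP G1 hx) (HeunAux.root_specP G3 hy)
  have D23 : ∀ x, (specP e1 e2 e3 (-(l0 : ℝ) / 2) (-((k + 1 : ℕ) : ℝ) / 2)
      ((((n + 1 : ℕ) : ℝ) + 1) / 2) (-(l3 : ℝ) / 2) k).eval x = 0 →
      (specP e1 e2 e3 (-(l0 : ℝ) / 2) (-((k + 1 : ℕ) : ℝ) / 2) (-((n + 1 : ℕ) : ℝ) / 2)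
        (((l3 : ℝ) + 1) / 2) l0).eval x = 0 → False := by
    intro x hx hy
    exact HeunAux.no_common _ _ _ _ _ _ _ _ _ _ _ x k l0 hu hv huv hsum _ _ _ hk hn' h3
      (Or.inl rfl) (Or.inl rfl) (Or.inr (by ring)) (Or.inr (by ring))
      (Or.inl rfl) (Or.inr (Or.inr (by ring))) (by push_cast; linarith)
      (by push_cast; linarith)
      (HeunAux.root_specP G2 hx) (HeunAux.root_specP G3 hy)
  refine (((HeunAux.good_specP G0).mul (HeunAux.good_specP G1) D01).mul
    (HeunAux.good_specP G2) ?_).mul (HeunAux.good_specP G3) ?_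
  · intro x hx hy
    rw [Polynomial.eval_mul] at hx
    rcases mul_eq_zero.1 hx with h | h
    · exact D02 x h hy
    · exact D12 x h hy
  · intro x hx hy
    rw [Polynomial.eval_mul, Polynomial.eval_mul] at hx
    rcases mul_eq_zero.1 hx with h | h
    · rcases mul_eq_zero.1 h with h | h
      · exact D03 x h hy
      · exact D13 x h hy
    · exact D23 x h hy
end

section
/- Assume l0, l1, l2, l3 ∈ ℤ_{≥0} with l0 + l3 = l1 + l2 + 1, l0 + l1 ≥ l2 + l3 + 1 and l0 + l2 ≥ l1 + l3 + 1, and let e1 > e3 > e2 be real numbers with e1+e2+e3 = 0 (corresponding to a purely imaginary modulus τ ∈ iℝ_{>0}). Then all the zeros of the spectral polynomial Q^{(l0,l1,l2,l3)}(E) are real and unequal. -/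
open Polynomial

noncomputable def hOp (e1 e2 e3 g1 g2 g3 κ μ : ℂ) (y : ℂ[X]) : ℂ[X] :=
  (X - C e1) * (X - C e2) * (X - C e3) * derivative (derivative y)
  + (C g1 * (X - C e2) * (X - C e3) + C g2 * (X - C e1) * (X - C e3)
      + C g3 * (X - C e1) * (X - C e2)) * derivative y
  + (C κ * X + C μ) * y

lemma hOp_add (e1 e2 e3 g1 g2 g3 κ μ : ℂ) (y z : ℂ[X]) :
    hOp e1 e2 e3 g1 g2 g3 κ μ (y + z) =
      hOp e1 e2 e3 g1 g2 g3 κ μ y + hOp e1 e2 e3 g1 g2 g3 κ μ z := by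
  simp only [hOp, derivative_add]; ring

lemma hOp_C_mul (e1 e2 e3 g1 g2 g3 κ μ c : ℂ) (y : ℂ[X]) :
    hOp e1 e2 e3 g1 g2 g3 κ μ (C c * y) = C c * hOp e1 e2 e3 g1 g2 g3 κ μ y := by
  simp only [hOp, derivative_C_mul]; ring

lemma hOp_swap12 (e1 e2 e3 g1 g2 g3 κ μ : ℂ) (y : ℂ[X]) :
    hOp e2 e1 e3 g2 g1 g3 κ μ y = hOp e1 e2 e3 g1 g2 g3 κ μ y := by
  simp only [hOp]; ring

lemma hOp_swap13 (e1 e2 e3 g1 g2 g3 κ μ : ℂ) (y : ℂ[X]) :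
    hOp e3 e2 e1 g3 g2 g1 κ μ y = hOp e1 e2 e3 g1 g2 g3 κ μ y := by
  simp only [hOp]; ring

lemma pow_d1 (e : ℂ) (i : ℕ) :
    (X - C e) * derivative ((X - C e) ^ i) = C (i : ℂ) * (X - C e) ^ i := by
  cases i with
  | zero => simp
  | succ n => rw [derivative_X_sub_C_pow]; simp [pow_succ]; ring

lemma pow_d2 (e : ℂ) (i : ℕ) :
    (X - C e) ^ 2 * derivative (derivative ((X - C e) ^ i))
      = C (i : ℂ) * (C (i : ℂ) - 1) * (X - C e) ^ i := by
  have h := congrArg derivative (pow_d1 e i)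
  have h1 := pow_d1 e i
  simp only [derivative_mul, derivative_sub, derivative_X, derivative_C, sub_zero, one_mul,
    zero_mul, zero_add] at h
  linear_combination (X - C e) * h + (C (i : ℂ) - 1) * h1

/-- action of the operator on `(X - e3)^m`, multiplied by `X - e3`. -/
lemma hOp_pow (e1 e2 e3 g1 g2 g3 al be q : ℂ) (hg : g1 + g2 + g3 = al + be + 1) (m : ℕ) :
    (X - C e3) * hOp e1 e2 e3 g1 g2 g3 (al * be) (-(al * be * e3) - q) ((X - C e3) ^ m) =
      (X - C e3) ^ m * (C ((e1 - e3) * (e2 - e3) * m * (m - 1 + g3))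
        - C (m * ((m - 1 + g3) * (e1 + e2 - 2 * e3) + (e2 - e3) * g1 + (e1 - e3) * g2) + q)
            * (X - C e3)
        + C ((m + al) * (m + be)) * (X - C e3) ^ 2) := by
  have h1 := pow_d1 e3 m
  have h2 := pow_d2 e3 m
  have hg' : g1 = al + be + 1 - g2 - g3 := by linear_combination hg
  subst hg'
  simp only [hOp, map_add, map_sub, map_mul, map_neg, map_one, C_ofNat]
  linear_combination (X - C e1) * (X - C e2) * h2 + ((C al + C be + 1 - C g2 - C g3) * (X - C e2) * (X - C e3) + C g2 * (X - C e1) * (X - C e3)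
      + C g3 * (X - C e1) * (X - C e2)) * h1

lemma sol_of_rec (e1 e2 e3 g1 g2 g3 al be q : ℂ) (hg : g1 + g2 + g3 = al + be + 1)
    (u : ℕ → ℂ) (h0 : (e1 - e3) * (e2 - e3) * g3 * u 1 = q * u 0)
    (hu : ∀ m : ℕ, (e1 - e3) * (e2 - e3) * (m + 2) * (m + 1 + g3) * u (m + 2) =
      -((m + al) * (m + be)) * u m
      + ((m + 1) * ((m + g3) * (e1 + e2 - 2 * e3) + (e2 - e3) * g1 + (e1 - e3) * g2) + q)
        * u (m + 1)) (n : ℕ) :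
    hOp e1 e2 e3 g1 g2 g3 (al * be) (-(al * be * e3) - q)
      (∑ m ∈ Finset.range (n + 1), C (u m) * (X - C e3) ^ m) =
    - (C ((e1 - e3) * (e2 - e3) * (n + 1) * (n + g3) * u (n + 1)) * (X - C e3) ^ n)
      + C ((n + al) * (n + be) * u n) * (X - C e3) ^ (n + 1) := by
  have hX : (X - C e3 : ℂ[X]) ≠ 0 := X_sub_C_ne_zero e3
  induction n with
  | zero =>
    apply mul_left_cancel₀ hX
    have h := hOp_pow e1 e2 e3 g1 g2 g3 al be q hg 0
    have h0' := congrArg C h0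
    simp only [Finset.sum_range_one, zero_add, hOp_C_mul, Nat.cast_zero]
    simp only [map_add, map_sub, map_mul, map_neg, map_one, map_zero, C_ofNat, Nat.cast_zero] at h h0' ⊢
    linear_combination C (u 0) * h + (X - C e3) * h0'
  | succ n ih =>
    rw [Finset.sum_range_succ, hOp_add, ih, hOp_C_mul]
    apply mul_left_cancel₀ hX
    have h := hOp_pow e1 e2 e3 g1 g2 g3 al be q hg (n + 1)
    have h0' := congrArg C (hu n)
    simp only [map_add, map_sub, map_mul, map_neg, map_one, map_zero, C_ofNat, Nat.cast_add, Nat.cast_one] at h h0' ⊢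
    linear_combination C (u (n + 1)) * h + (X - C e3) ^ (n + 2) * h0'

/-- action on `(X-e1)^i (X-e2)^j`. -/
lemma hOp_pow2 (e1 e2 e3 g1 g2 g3 al be q : ℂ) (hg : g1 + g2 + g3 = al + be + 1) (i j : ℕ)
    (hN : al = -((i : ℂ) + j)) :
    (X - C e1) * (X - C e2) * hOp e1 e2 e3 g1 g2 g3 (al * be) (-(al * be * e3) - q)
      ((X - C e1) ^ i * (X - C e2) ^ j) =
      (X - C e1) ^ i * (X - C e2) ^ j * (C ((e1 - e3) * i * (i - 1 + g1)) * (X - C e2) ^ 2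
        + C ((e1 - e2) * i * (i - 1 + g1)
            + (e1 - e3) * (2 * i * j + g1 * j + g2 * i + al * be) + (e1 - e2) * g3 * i - q)
            * ((X - C e1) * (X - C e2))
        - C ((e3 - e2) * j * (j - 1 + g2)) * (X - C e1) ^ 2) := by
  have h1 := pow_d1 e1 i
  have h2 := pow_d2 e1 i
  have k1 := pow_d1 e2 j
  have k2 := pow_d2 e2 j
  have hg' : be = g1 + g2 + g3 - al - 1 := by linear_combination -hg
  subst hg' hN
  simp only [hOp, derivative_mul, derivative_add]
  generalize derivative (derivative ((X - C e1) ^ i)) = D2 at *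
  generalize derivative (derivative ((X - C e2) ^ j)) = F2 at *
  generalize derivative ((X - C e1) ^ i) = D1 at *
  generalize derivative ((X - C e2) ^ j) = F1 at *
  generalize (X - C e1) ^ i = D0 at *
  generalize (X - C e2) ^ j = F0 at *
  simp only [map_add, map_sub, map_mul, map_neg, map_one, C_ofNat]
  generalize C (i : ℂ) = ci at *
  generalize C (j : ℂ) = cj at *
  linear_combination (X - C e3) * (X - C e2) ^ 2 * F0 * h2
    + (X - C e3) * (X - C e1) ^ 2 * D0 * k2
    + 2 * (X - C e3) * (X - C e1) * (X - C e2) * ((X - C e2) * F1 * h1 + ci * D0 * k1)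
    + (C g1 * (X - C e2) * (X - C e3) + C g2 * (X - C e1) * (X - C e3)
      + C g3 * (X - C e1) * (X - C e2)) * ((X - C e2) * F0 * h1 + (X - C e1) * D0 * k1)

set_option maxRecDepth 10000 in
lemma sol_of_rec2 (e1 e2 e3 g1 g2 g3 al be q : ℂ) (hg : g1 + g2 + g3 = al + be + 1)
    (N : ℕ) (hN : al = -(N : ℂ))
    (d : ℕ → ℂ) (h0 : (e1 - e3) * g1 * d 1 = (q - (e1 - e3) * (g1 * N + al * be)) * d 0)
    (hd : ∀ m : ℕ, (e1 - e3) * (m + 2) * (m + 1 + g1) * d (m + 2) =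
      (q - ((e1 - e2) * (m + 1) * (m + g1)
            + (e1 - e3) * (2 * (m + 1) * (N - (m + 1)) + g1 * (N - (m + 1)) + g2 * (m + 1) + al * be)
            + (e1 - e2) * g3 * (m + 1))) * d (m + 1)
      + (e3 - e2) * (N - m) * (N - m - 1 + g2) * d m) (n k : ℕ) (hnk : n + k = N) :
    (X - C e1) * (X - C e2) * hOp e1 e2 e3 g1 g2 g3 (al * be) (-(al * be * e3) - q)
      (∑ m ∈ Finset.range (n + 1), C (d m) * ((X - C e1) ^ m * (X - C e2) ^ (N - m))) =
    - (C ((e1 - e3) * (n + 1) * (n + g1) * d (n + 1)) * ((X - C e1) ^ (n + 1) * (X - C e2) ^ (k + 1)))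
      - C ((e3 - e2) * k * (k - 1 + g2) * d n) * ((X - C e1) ^ (n + 2) * (X - C e2) ^ k) := by
  induction n generalizing k with
  | zero =>
    have hk : k = N := by omega
    subst hk
    have h := hOp_pow2 e1 e2 e3 g1 g2 g3 al be q hg 0 k (by simp [hN])
    have h0' := congrArg C h0
    simp only [Finset.sum_range_one, zero_add, hOp_C_mul, Nat.cast_zero, Nat.sub_zero]
    simp only [map_add, map_sub, map_mul, map_neg, map_one, map_zero, C_ofNat, Nat.cast_zero] at h h0' ⊢
    linear_combination C (d 0) * h + (X - C e1) * (X - C e2) ^ (k + 1) * h0'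
  | succ n ih =>
    rw [Finset.sum_range_succ, hOp_add, mul_add, ih (k + 1) (by omega), hOp_C_mul]
    have hk : N - (n + 1) = k := by omega
    have hNk : (N : ℂ) = n + 1 + k := by rw [← hnk]; push_cast; ring
    rw [hk]
    have h := hOp_pow2 e1 e2 e3 g1 g2 g3 al be q hg (n + 1) k (by rw [hN, hNk]; push_cast; ring)
    have h0' := congrArg C (hd n)
    rw [hNk] at h0'
    simp only [map_add, map_sub, map_mul, map_neg, map_one, map_zero, C_ofNat, Nat.cast_add, Nat.cast_one] at h h0' ⊢
    linear_combination C (d (n + 1)) * h + (X - C e1) ^ (n + 2) * (X - C e2) ^ (k + 1) * h0'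

/-- Polynomials defined by a three-term recurrence. -/
noncomputable def jac (s : ℝ) (A b B : ℕ → ℝ) : ℕ → ℝ[X]
  | 0 => 1
  | 1 => C (A 0)⁻¹ * (C s * X + C (b 0))
  | m + 2 => C (A (m + 1))⁻¹ * ((C s * X + C (b (m + 1))) * jac s A b B (m + 1)
      - C (B m) * jac s A b B m)

lemma jac_one (s : ℝ) (A b B : ℕ → ℝ) (hA : A 0 ≠ 0) :
    C (A 0) * jac s A b B 1 = (C s * X + C (b 0)) * jac s A b B 0 := by
  rw [jac, jac, ← mul_assoc, ← C_mul, mul_inv_cancel₀ hA]; simp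

lemma jac_succ (s : ℝ) (A b B : ℕ → ℝ) (m : ℕ) (hA : A (m + 1) ≠ 0) :
    C (A (m + 1)) * jac s A b B (m + 2) = (C s * X + C (b (m + 1))) * jac s A b B (m + 1)
      - C (B m) * jac s A b B m := by
  rw [jac, ← mul_assoc, ← C_mul, mul_inv_cancel₀ hA]; simp

lemma jac_natDegree (s : ℝ) (A b B : ℕ → ℝ) (hs : s ≠ 0) (hA : ∀ m, A m ≠ 0) (n : ℕ) :
    (jac s A b B n).natDegree = n ∧ (jac s A b B n) ≠ 0 ∧
    (jac s A b B (n+1)).natDegree = n+1 ∧ (jac s A b B (n+1)) ≠ 0 := by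
  have key : ∀ c : ℝ, (C s * X + C c).natDegree = 1 := fun c => natDegree_linear hs
  have key0 : ∀ c : ℝ, (C s * X + C c) ≠ 0 := fun c h => by
    have := key c; rw [h] at this; simp at this
  induction n with
  | zero =>
    have h1 : (jac s A b B 1).natDegree = 1 := by
      rw [jac, natDegree_C_mul (inv_ne_zero (hA 0)), key]
    refine ⟨by simp [jac], by simp [jac], h1, ?_⟩
    intro h; simp only [zero_add] at h; rw [h] at h1; simp at h1
  | succ n ih =>
    obtain ⟨i1, i2, i3, i4⟩ := ih
    have h1 : (jac s A b B (n + 2)).natDegree = n + 2 := by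
      rw [jac, natDegree_C_mul (inv_ne_zero (hA _)), natDegree_sub_eq_left_of_natDegree_lt]
      · rw [natDegree_mul (key0 _) i4, key, i3]; ring
      · rw [natDegree_mul (key0 _) i4, key, i3]
        have := natDegree_C_mul_le (B n) (jac s A b B n)
        omega
    refine ⟨i3, i4, h1, ?_⟩
    intro h; rw [h] at h1; simp at h1

noncomputable def wt (A B : ℕ → ℝ) : ℕ → ℝ
  | 0 => 1
  | m + 1 => wt A B m * (A m / B m)

lemma wt_pos (A B : ℕ → ℝ) (N : ℕ) (h : ∀ m < N, 0 < A m * B m) : ∀ m ≤ N, 0 < wt A B m := by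
  intro m
  induction m with
  | zero => intro _; simp [wt]
  | succ m ih =>
    intro hm
    rw [wt]
    have h1 := ih (by omega)
    have h2 := h m (by omega)
    have h3 : B m ≠ 0 := by rintro h; simp [h] at h2
    have : A m / B m = A m * B m / (B m)^2 := by field_simp
    rw [this]
    positivity

lemma wt_mul (A B : ℕ → ℝ) (m : ℕ) (h : 0 < A m * B m) : wt A B (m+1) * B m = wt A B m * A m := by
  have h3 : B m ≠ 0 := by rintro h'; simp [h'] at h
  rw [wt]; field_simp

lemma cd_deriv (s : ℝ) (A b B : ℕ → ℝ) (hA : ∀ m, A m ≠ 0) (N : ℕ)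
    (h : ∀ m < N, 0 < A m * B m) : ∀ n ≤ N,
    C s * ∑ m ∈ Finset.range (n + 1), C (wt A B m) * jac s A b B m ^ 2 =
      C (wt A B n) * C (A n) * (derivative (jac s A b B (n + 1)) * jac s A b B n
        - derivative (jac s A b B n) * jac s A b B (n + 1)) := by
  intro n
  induction n with
  | zero =>
    intro _
    have h1 := congrArg derivative (jac_one s A b B (hA 0))
    have h0 : jac s A b B 0 = 1 := by rw [jac]
    simp only [derivative_C_mul, derivative_mul, derivative_add, derivative_X, derivative_C] at h1
    simp only [Finset.sum_range_one, wt, h0, derivative_one, map_one, zero_add] at h1 ⊢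
    linear_combination -h1
  | succ n ih =>
    intro hn
    rw [Finset.sum_range_succ, mul_add, ih (by omega)]
    have e := jac_succ s A b B n (hA _)
    have h1 := congrArg derivative e
    have hw := congrArg C (wt_mul A B n (h n (by omega)))
    simp only [derivative_C_mul, derivative_mul, derivative_add, derivative_sub, derivative_X, derivative_C, map_mul] at h1 hw
    linear_combination -C (wt A B (n+1)) * (jac s A b B (n+1)) * h1
      + C (wt A B (n+1)) * derivative (jac s A b B (n + 1)) * e
      - hw * (derivative (jac s A b B (n + 1)) * jac s A b B n
        - derivative (jac s A b B n) * jac s A b B (n + 1))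

lemma cd_two (s : ℝ) (A b B : ℕ → ℝ) (hA : ∀ m, A m ≠ 0) (N : ℕ)
    (h : ∀ m < N, 0 < A m * B m) (x y : ℂ) : ∀ n ≤ N,
    (s : ℂ) * (x - y) * ∑ m ∈ Finset.range (n + 1), (wt A B m : ℂ) * (aeval x (jac s A b B m) * aeval y (jac s A b B m)) =
      wt A B n * A n * (aeval x (jac s A b B (n + 1)) * aeval y (jac s A b B n)
        - aeval x (jac s A b B n) * aeval y (jac s A b B (n + 1))) := by
  intro n
  induction n with
  | zero =>
    intro _
    have hx := congrArg (aeval x) (jac_one s A b B (hA 0))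
    have hy := congrArg (aeval y) (jac_one s A b B (hA 0))
    have h0 : jac s A b B 0 = 1 := by rw [jac]
    simp [h0, wt] at hx hy ⊢
    linear_combination hy - hx
  | succ n ih =>
    intro hn
    rw [Finset.sum_range_succ, mul_add, ih (by omega)]
    have hx := congrArg (aeval x) (jac_succ s A b B n (hA _))
    have hy := congrArg (aeval y) (jac_succ s A b B n (hA _))
    have hw := congrArg ((↑) : ℝ → ℂ) (wt_mul A B n (h n (by omega)))
    simp at hx hy hw
    linear_combination (wt A B (n+1) : ℂ) * (aeval x (jac s A b B (n + 1)) * hy - aeval y (jac s A b B (n + 1)) * hx)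
      - hw * (aeval x (jac s A b B (n + 1)) * aeval y (jac s A b B n)
        - aeval x (jac s A b B n) * aeval y (jac s A b B (n + 1)))

/-- nonzero, simple complex roots, all of them real -/
def Good (P : ℝ[X]) : Prop :=
  P.map (algebraMap ℝ ℂ) ≠ 0 ∧ (P.map (algebraMap ℝ ℂ)).roots.Nodup ∧
    ∀ z ∈ (P.map (algebraMap ℝ ℂ)).roots, z.im = 0

lemma jac_good (s : ℝ) (A b B : ℕ → ℝ) (hs : s ≠ 0) (hA : ∀ m, A m ≠ 0) (N : ℕ)
    (h : ∀ m < N, 0 < A m * B m) : Good (jac s A b B (N + 1)) := by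
  have hne := (jac_natDegree s A b B hs hA N).2.2.2
  have hne' : (jac s A b B (N + 1)).map (algebraMap ℝ ℂ) ≠ 0 :=
    (Polynomial.map_ne_zero_iff (algebraMap ℝ ℂ).injective).2 hne
  have hw := wt_pos A B N h
  have real : ∀ z ∈ ((jac s A b B (N + 1)).map (algebraMap ℝ ℂ)).roots, z.im = 0 := by
    intro z hz
    rw [mem_roots hne', IsRoot.def, eval_map_algebraMap] at hz
    have hconj : ∀ p : ℝ[X], aeval (starRingEnd ℂ z) p = starRingEnd ℂ (aeval z p) := fun p => by
      have := Polynomial.aeval_algHom_apply (Complex.conjAe : ℂ →ₐ[ℝ] ℂ) z p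
      simpa using this
    have k := cd_two s A b B hA N h z (starRingEnd ℂ z) N le_rfl
    simp only [hconj, hz, map_zero, mul_zero, zero_mul, sub_zero] at k
    simp only [Complex.mul_conj, mul_eq_zero] at k
    rcases k with (k | k) | k
    · exact absurd (by exact_mod_cast k) hs
    · have := congrArg Complex.im k
      simp at this; linarith
    · exfalso
      have k' : ∑ m ∈ Finset.range (N + 1), wt A B m * Complex.normSq (aeval z (jac s A b B m)) = 0 := by
        exact_mod_cast k
      rw [Finset.sum_eq_zero_iff_of_nonneg] at k'
      · have := k' 0 (by simp)
        simp [wt, jac] at this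
      · intro i hi
        exact mul_nonneg (hw i (by simp at hi; omega)).le (Complex.normSq_nonneg _)
  refine ⟨hne', ?_, real⟩
  rw [Multiset.nodup_iff_count_le_one]
  intro z
  by_contra! hc
  rw [count_roots, one_lt_rootMultiplicity_iff_isRoot hne'] at hc
  obtain ⟨h1, h2⟩ := hc
  have hz : z.im = 0 := real z ((mem_roots hne').2 h1)
  obtain ⟨x, rfl⟩ : ∃ x : ℝ, z = x := ⟨z.re, by apply Complex.ext <;> simp [hz]⟩
  have ev : ∀ p : ℝ[X], (p.map (algebraMap ℝ ℂ)).IsRoot (x : ℂ) → p.eval x = 0 := by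
    intro p hp
    have : (p.map (algebraMap ℝ ℂ)).IsRoot (algebraMap ℝ ℂ x) := hp
    rw [IsRoot.def, eval_map_algebraMap, aeval_algebraMap_apply] at this
    simpa using this
  have h1' := ev _ h1
  rw [derivative_map] at h2
  have h2' := ev _ h2
  have k := congrArg (eval x) (cd_deriv s A b B hA N h N le_rfl)
  simp only [eval_mul, eval_C, eval_sub, h1', h2', eval_finsetSum, eval_pow] at k
  simp only [zero_mul, mul_zero, sub_zero, mul_eq_zero, hs, false_or] at k
  rw [Finset.sum_eq_zero_iff_of_nonneg] at k
  · have := k 0 (by simp)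
    simp [wt, jac] at this
  · intro i hi
    exact mul_nonneg (hw i (by simp at hi; omega)).le (sq_nonneg _)

/-- Multiplicity lemma. -/
lemma mult_lemma (p r u w : ℂ[X]) (e d : ℂ) (hp : p ≠ 0) (hr : r ≠ 0) (hu : u.eval e ≠ 0)
    (h : (X - C e) * u * (p * derivative r - derivative p * r)
      + p * r * (C d * u + (X - C e) * w) = 0) : ∃ i j : ℕ, d = (i : ℂ) - j := by
  obtain ⟨i, p', hp', hpe⟩ : ∃ i : ℕ, ∃ p' : ℂ[X], p = (X - C e) ^ i * p' ∧ p'.eval e ≠ 0 := by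
    obtain ⟨q, h1, h2⟩ := exists_eq_pow_rootMultiplicity_mul_and_not_dvd p hp e
    exact ⟨_, q, h1, fun h => h2 (dvd_iff_isRoot.2 h)⟩
  obtain ⟨j, r', hr', hre⟩ : ∃ i : ℕ, ∃ p' : ℂ[X], r = (X - C e) ^ i * p' ∧ p'.eval e ≠ 0 := by
    obtain ⟨q, h1, h2⟩ := exists_eq_pow_rootMultiplicity_mul_and_not_dvd r hr e
    exact ⟨_, q, h1, fun h => h2 (dvd_iff_isRoot.2 h)⟩
  have d1 : ∀ i : ℕ, (X - C e) * derivative ((X - C e) ^ i) = C (i : ℂ) * (X - C e) ^ i := by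
    intro i
    cases i with
    | zero => simp
    | succ n => rw [derivative_X_sub_C_pow]; simp [pow_succ]; ring
  have hi := d1 i
  have hj := d1 j
  subst hp' hr'
  refine ⟨i, j, ?_⟩
  simp only [derivative_mul] at h
  have key : ((X - C e) ^ i * (X - C e) ^ j) * (u * p' * r' * (C (j : ℂ) - C (i : ℂ) + C d)
     + (X - C e) * (u * (p' * derivative r' - derivative p' * r') + p' * r' * w)) = 0 := by
    linear_combination h - u * (X - C e) ^ i * p' * r' * hj + u * (X - C e) ^ j * p' * r' * hi
  have hX : (X - C e : ℂ[X]) ≠ 0 := X_sub_C_ne_zero e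
  rcases mul_eq_zero.1 key with k | k
  · exact absurd k (mul_ne_zero (pow_ne_zero _ hX) (pow_ne_zero _ hX))
  · have := congrArg (eval e) k
    simp [hu, hpe, hre] at this
    linear_combination this

/-- not an integer -/
def NonInt (x : ℂ) : Prop := ∀ i j : ℕ, x ≠ (i : ℂ) - j

lemma wr1 (e1 e2 e3 g1 g2 g3 κ κ' μ μ' : ℂ) (p r : ℂ[X]) (hp : p ≠ 0) (hr : r ≠ 0)
    (h23 : e2 ≠ e3) (hg3 : NonInt g3) (hg1 : NonInt (1 - g1))
    (hκ : κ' = κ + (1 - g1) * (g2 + g3)) (hμ : μ' = μ - (1 - g1) * (g2 * e3 + g3 * e2))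
    (h1 : hOp e1 e2 e3 g1 g2 g3 κ μ p = 0) (h2 : hOp e1 e2 e3 (2 - g1) g2 g3 κ' μ' r = 0) :
    False := by
  set G := (X - C e1) * (p * derivative r - derivative p * r) + C (1 - g1) * (p * r) with hG
  have hG0 : G = 0 := by
    by_contra hne
    obtain ⟨i, j, hij⟩ := mult_lemma 1 G (X - C e2) (C g2) e3 g3 one_ne_zero hne
      (by simp [sub_eq_zero, h23.symm]) (by
        subst hκ hμ
        rw [hG]
        simp only [hOp, derivative_mul, derivative_add, derivative_sub, derivative_X, derivative_C,
          derivative_one, map_add, map_sub, map_mul, map_one, C_ofNat] at h1 h2 ⊢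
        linear_combination p * h2 - r * h1)
    exact hg3 i j hij
  obtain ⟨i, j, hij⟩ := mult_lemma p r 1 0 e1 (1 - g1) hp hr (by simp)
    (by linear_combination hG0)
  exact hg1 i j hij

lemma wr2 (e1 e2 e3 g1 g2 g3 κ κ' μ μ' : ℂ) (p r : ℂ[X]) (hp : p ≠ 0) (hr : r ≠ 0)
    (h12 : e1 ≠ e2) (hg3 : NonInt g3) (hg1 : NonInt (1 - g1))
    (hκ : κ' = κ + (2 - g1 - g2) * (g3 + 1))
    (hμ : μ' = μ - (1 - g1) * (g3 * e2 + e3) - (1 - g2) * (g3 * e1 + e3))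
    (h1 : hOp e1 e2 e3 g1 g2 g3 κ μ p = 0) (h2 : hOp e1 e2 e3 (2 - g1) (2 - g2) g3 κ' μ' r = 0) :
    False := by
  set G := (X - C e1) * (X - C e2) * (p * derivative r - derivative p * r)
    + (C (1 - g1) * (X - C e2) + C (1 - g2) * (X - C e1)) * (p * r) with hG
  have hG0 : G = 0 := by
    by_contra hne
    obtain ⟨i, j, hij⟩ := mult_lemma 1 G 1 0 e3 g3 one_ne_zero hne
      (by simp) (by
        subst hκ hμ
        rw [hG]
        simp only [hOp, derivative_mul, derivative_add, derivative_sub, derivative_X, derivative_C,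
          derivative_one, map_add, map_sub, map_mul, map_one, C_ofNat] at h1 h2 ⊢
        linear_combination p * h2 - r * h1)
    exact hg3 i j hij
  obtain ⟨i, j, hij⟩ := mult_lemma p r (X - C e2) (C (1 - g2)) e1 (1 - g1) hp hr
    (by simp [sub_eq_zero, h12]) (by linear_combination hG0)
  exact hg1 i j hij

lemma rec_of_sol (e1 e2 e3 g1 g2 g3 al be q : ℂ) (hg : g1 + g2 + g3 = al + be + 1) (y : ℂ[X])
    (hy : hOp e1 e2 e3 g1 g2 g3 (al * be) (-(al * be * e3) - q) y = 0) :
    (e1 - e3) * (e2 - e3) * g3 * (y.comp (X + C e3)).coeff 1 = q * (y.comp (X + C e3)).coeff 0 ∧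
    ∀ m : ℕ, (e1 - e3) * (e2 - e3) * (m + 2) * (m + 1 + g3) * (y.comp (X + C e3)).coeff (m + 2) =
      -((m + al) * (m + be)) * (y.comp (X + C e3)).coeff m
      + ((m + 1) * ((m + g3) * (e1 + e2 - 2 * e3) + (e2 - e3) * g1 + (e1 - e3) * g2) + q)
        * (y.comp (X + C e3)).coeff (m + 1) := by
  have hg' : g1 = al + be + 1 - g2 - g3 := by linear_combination hg
  set f := y.comp (X + C e3) with hf
  have d1 : derivative f = (derivative y).comp (X + C e3) := by
    rw [hf, derivative_comp]; simp
  have d2 : derivative (derivative f) = (derivative (derivative y)).comp (X + C e3) := by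
    rw [d1, derivative_comp]; simp
  have h := congrArg (fun P : ℂ[X] => P.comp (X + C e3)) hy
  simp only [hOp, add_comp, mul_comp, sub_comp, X_comp, C_comp, zero_comp, ← d1, ← d2, ← hf] at h
  have F1 : ∀ m : ℕ, (X * derivative f).coeff m = m * f.coeff m := by
    intro m
    cases m with
    | zero => simp
    | succ m => rw [coeff_X_mul, coeff_derivative]; push_cast; ring
  have F2 : ∀ m : ℕ, (X * (X * derivative (derivative f))).coeff m = m * (m - 1) * f.coeff m := by
    intro m
    match m with
    | 0 => simp
    | 1 => rw [coeff_X_mul]; simp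
    | m + 2 => rw [coeff_X_mul, coeff_X_mul, coeff_derivative, coeff_derivative]; push_cast; ring
  have key : X * (X * (X * (X * derivative (derivative f)) + C (g1 + g2 + g3) * (X * derivative f)
        + C (al * be) * f))
      - X * (C (e1 + e2 - 2 * e3) * (X * (X * derivative (derivative f)))
        + C (g3 * (e1 + e2 - 2 * e3) + (e2 - e3) * g1 + (e1 - e3) * g2) * (X * derivative f) + C q * f)
      + C ((e1 - e3) * (e2 - e3)) * (X * (X * derivative (derivative f)) + C g3 * (X * derivative f)) = 0 := by
    simp only [map_add, map_sub, map_mul, map_neg, C_ofNat] at h ⊢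
    linear_combination X * h
  constructor
  · have k := congrArg (fun P : ℂ[X] => P.coeff 1) key
    simp only [coeff_add, coeff_sub, coeff_X_mul, coeff_C_mul, F1, F2, coeff_zero,
      mul_coeff_zero, coeff_X_zero, coeff_C_zero] at k
    push_cast at k
    linear_combination k
  · intro m
    have k := congrArg (fun P : ℂ[X] => P.coeff (m + 2)) key
    simp only [coeff_add, coeff_sub, coeff_X_mul, coeff_C_mul, F1, F2, coeff_zero] at k
    push_cast at k
    rw [hg'] at k ⊢
    linear_combination k

/-! Specialization to the Heun coefficients. -/

noncomputable def gA (e1 e2 e3 a3 : ℝ) (m : ℕ) : ℝ :=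
  (e1 - e3) * (e2 - e3) * (m + 1) * (m + (2 * a3 + 1 / 2))

noncomputable def gq (e1 e2 e3 a0 a1 a2 a3 : ℝ) : ℝ :=
  e1 * (a2 + a3) ^ 2 + e2 * (a1 + a3) ^ 2 + e3 * (a1 + a2) ^ 2
      - e3 * ((a0 + a1 + a2 + a3) * (-a0 + 1 / 2 + a1 + a2 + a3))

noncomputable def gb (e1 e2 e3 a0 a1 a2 a3 : ℝ) (m : ℕ) : ℝ :=
  m * ((m - 1 + (2 * a3 + 1 / 2)) * (e1 + e2 - 2 * e3)
    + (e2 - e3) * (2 * a1 + 1 / 2) + (e1 - e3) * (2 * a2 + 1 / 2)) + gq e1 e2 e3 a0 a1 a2 a3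

noncomputable def gB (a0 a1 a2 a3 : ℝ) (m : ℕ) : ℝ :=
  (m + (a0 + a1 + a2 + a3)) * (m + (-a0 + 1 / 2 + a1 + a2 + a3))

lemma heunC_eq_jac (e1 e2 e3 a0 a1 a2 a3 : ℝ) (n : ℕ) :
    heunC e1 e2 e3 a0 a1 a2 a3 n =
      jac (-(1 / 4)) (gA e1 e2 e3 a3) (gb e1 e2 e3 a0 a1 a2 a3) (gB a0 a1 a2 a3) n := by
  induction n using Nat.twoStepInduction with
  | zero => rw [heunC, jac]
  | one =>
    rw [heunC, jac]
    congr 1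
    · congr 2; simp [gA]
    · simp [heunQE, gb, gq]; ring
  | more m h1 h2 =>
    rw [heunC, jac, h1, h2]
    congr 1
    · congr 2; simp only [gA]; push_cast; ring
    · have e : C (((m : ℝ) + 1) * (((m : ℝ) + (2 * a3 + 1 / 2)) * (e1 + e2 - 2 * e3)
                + (e2 - e3) * (2 * a1 + 1 / 2) + (e1 - e3) * (2 * a2 + 1 / 2)))
              + heunQE e1 e2 e3 a0 a1 a2 a3
            = C (-(1 / 4)) * X + C (gb e1 e2 e3 a0 a1 a2 a3 (m + 1)) := by
        simp only [heunQE, gb, gq]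
        push_cast
        simp only [map_add, map_sub, map_mul, map_neg, map_one, C_ofNat]
        ring
      rw [e]
      simp only [gB, C_neg]
      ring

lemma gA_ne (e1 e2 e3 a3 : ℝ) (h1 : e1 ≠ e3) (h2 : e2 ≠ e3)
    (h : ∃ k : ℤ, 2 * a3 = k) (m : ℕ) : gA e1 e2 e3 a3 m ≠ 0 := by
  obtain ⟨k, hk⟩ := h
  unfold gA
  rw [hk]
  refine mul_ne_zero (mul_ne_zero (mul_ne_zero (sub_ne_zero.2 h1) (sub_ne_zero.2 h2))
    (by positivity)) ?_
  intro h
  have : (2 * (m + k) + 1 : ℝ) = 0 := by linear_combination 2 * h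
  have : (2 * (m + k) + 1 : ℤ) = 0 := by exact_mod_cast this
  omega

lemma heunC_rec (e1 e2 e3 a0 a1 a2 a3 : ℝ) (h1 : e1 ≠ e3) (h2 : e2 ≠ e3)
    (h : ∃ k : ℤ, 2 * a3 = k) (z : ℂ) :
    ((e1 : ℂ) - e3) * (e2 - e3) * (2 * a3 + 1 / 2) * aeval z (heunC e1 e2 e3 a0 a1 a2 a3 1)
      = (gq e1 e2 e3 a0 a1 a2 a3 - z / 4) * aeval z (heunC e1 e2 e3 a0 a1 a2 a3 0) ∧
    ∀ m : ℕ, ((e1 : ℂ) - e3) * (e2 - e3) * (m + 2) * (m + 1 + (2 * a3 + 1 / 2))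
        * aeval z (heunC e1 e2 e3 a0 a1 a2 a3 (m + 2)) =
      -((m + (a0 + a1 + a2 + a3)) * (m + (-a0 + 1 / 2 + a1 + a2 + a3)))
        * aeval z (heunC e1 e2 e3 a0 a1 a2 a3 m)
      + ((m + 1) * ((m + (2 * a3 + 1 / 2)) * (e1 + e2 - 2 * e3) + (e2 - e3) * (2 * a1 + 1 / 2)
          + (e1 - e3) * (2 * a2 + 1 / 2)) + (gq e1 e2 e3 a0 a1 a2 a3 - z / 4))
        * aeval z (heunC e1 e2 e3 a0 a1 a2 a3 (m + 1)) := by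
  simp only [heunC_eq_jac]
  constructor
  · have k := congrArg (aeval z) (jac_one (-(1 / 4)) (gA e1 e2 e3 a3) (gb e1 e2 e3 a0 a1 a2 a3)
      (gB a0 a1 a2 a3) (gA_ne e1 e2 e3 a3 h1 h2 h 0))
    simp only [map_mul, map_add, aeval_X, aeval_C, Complex.coe_algebraMap] at k
    simp only [gA, gb] at k
    push_cast at k
    linear_combination k
  · intro m
    have k := congrArg (aeval z) (jac_succ (-(1 / 4)) (gA e1 e2 e3 a3) (gb e1 e2 e3 a0 a1 a2 a3)
      (gB a0 a1 a2 a3) m (gA_ne e1 e2 e3 a3 h1 h2 h _))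
    simp only [map_mul, map_add, map_sub, aeval_X, aeval_C, Complex.coe_algebraMap] at k
    simp only [gA] at k
    rw [gb, gB] at k
    push_cast at k
    linear_combination k

def IsSol (e1 e2 e3 a0 a1 a2 a3 : ℝ) (z : ℂ) (y : ℂ[X]) : Prop :=
  hOp e1 e2 e3 (2 * a1 + 1 / 2) (2 * a2 + 1 / 2) (2 * a3 + 1 / 2)
    ((a0 + a1 + a2 + a3) * (-a0 + 1 / 2 + a1 + a2 + a3))
    (z / 4 - e1 * (a2 + a3) ^ 2 - e2 * (a1 + a3) ^ 2 - e3 * (a1 + a2) ^ 2) y = 0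

lemma isSol_iff (e1 e2 e3 a0 a1 a2 a3 : ℝ) (z : ℂ) (y : ℂ[X]) :
    IsSol e1 e2 e3 a0 a1 a2 a3 z y ↔
  hOp e1 e2 e3 (2 * a1 + 1 / 2) (2 * a2 + 1 / 2) (2 * a3 + 1 / 2)
    (((a0 : ℂ) + a1 + a2 + a3) * (-a0 + 1 / 2 + a1 + a2 + a3))
    (-(((a0 : ℂ) + a1 + a2 + a3) * (-a0 + 1 / 2 + a1 + a2 + a3) * e3)
      - (gq e1 e2 e3 a0 a1 a2 a3 - z / 4)) y = 0 := by
  unfold IsSol gq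
  have e : (z / 4 - e1 * (a2 + a3) ^ 2 - e2 * (a1 + a3) ^ 2 - e3 * (a1 + a2) ^ 2 : ℂ)
    = (-(((a0 : ℂ) + a1 + a2 + a3) * (-a0 + 1 / 2 + a1 + a2 + a3) * e3)
      - (((e1 * (a2 + a3) ^ 2 + e2 * (a1 + a3) ^ 2 + e3 * (a1 + a2) ^ 2
      - e3 * ((a0 + a1 + a2 + a3) * (-a0 + 1 / 2 + a1 + a2 + a3)) : ℝ) : ℂ) - z / 4)) := by
    push_cast; ring
  rw [e]

lemma exists_sol (e1 e2 e3 a0 a1 a2 a3 : ℝ) (h1 : e1 ≠ e3) (h2 : e2 ≠ e3)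
    (h : ∃ k : ℤ, 2 * a3 = k) (N : ℕ) (hN : a0 + a1 + a2 + a3 = -(N : ℝ)) (z : ℂ)
    (hz : aeval z (heunC e1 e2 e3 a0 a1 a2 a3 (N + 1)) = 0) :
    ∃ y ≠ 0, IsSol e1 e2 e3 a0 a1 a2 a3 z y := by
  obtain ⟨r0, r⟩ := heunC_rec e1 e2 e3 a0 a1 a2 a3 h1 h2 h z
  have k := sol_of_rec e1 e2 e3 (2 * a1 + 1 / 2) (2 * a2 + 1 / 2) (2 * a3 + 1 / 2)
    (a0 + a1 + a2 + a3) (-a0 + 1 / 2 + a1 + a2 + a3) (gq e1 e2 e3 a0 a1 a2 a3 - z / 4) (by ring)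
    (fun m => aeval z (heunC e1 e2 e3 a0 a1 a2 a3 m)) r0 r N
  have hN' : (a0 + a1 + a2 + a3 : ℂ) = -(N : ℂ) := by exact_mod_cast hN
  refine ⟨_, ?_, (isSol_iff e1 e2 e3 a0 a1 a2 a3 z _).2 (k.trans ?_)⟩
  · intro h0
    have := congrArg (eval (e3 : ℂ)) h0
    rw [eval_finsetSum, Finset.sum_range_succ'] at this
    simp [heunC] at this
  · simp only [hz, hN']
    simp

lemma root_of_sol (e1 e2 e3 a0 a1 a2 a3 : ℝ) (h1 : e1 ≠ e3) (h2 : e2 ≠ e3)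
    (h : ∃ k : ℤ, 2 * a3 = k) (N : ℕ) (z : ℂ) (y : ℂ[X]) (hy : y ≠ 0) (hd : y.natDegree ≤ N)
    (hs : IsSol e1 e2 e3 a0 a1 a2 a3 z y) :
    aeval z (heunC e1 e2 e3 a0 a1 a2 a3 (N + 1)) = 0 := by
  obtain ⟨r0, r⟩ := heunC_rec e1 e2 e3 a0 a1 a2 a3 h1 h2 h z
  obtain ⟨s0, s⟩ := rec_of_sol e1 e2 e3 (2 * a1 + 1 / 2) (2 * a2 + 1 / 2) (2 * a3 + 1 / 2)
    (a0 + a1 + a2 + a3) (-a0 + 1 / 2 + a1 + a2 + a3) (gq e1 e2 e3 a0 a1 a2 a3 - z / 4) (by ring)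
    y ((isSol_iff e1 e2 e3 a0 a1 a2 a3 z _).1 hs)
  set f := y.comp (X + C (e3 : ℂ)) with hf
  have hA : ∀ m : ℕ, ((e1 : ℂ) - e3) * (e2 - e3) * (m + 1) * (m + (2 * a3 + 1 / 2)) ≠ 0 := by
    intro m
    have : ((gA e1 e2 e3 a3 m : ℝ) : ℂ) ≠ 0 := by exact_mod_cast gA_ne e1 e2 e3 a3 h1 h2 h m
    unfold gA at this
    push_cast at this
    exact this
  have hc0 : aeval z (heunC e1 e2 e3 a0 a1 a2 a3 0) = 1 := by simp [heunC]
  have key : ∀ m, f.coeff m = f.coeff 0 * aeval z (heunC e1 e2 e3 a0 a1 a2 a3 m) := by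
    intro m
    induction m using Nat.twoStepInduction with
    | zero => rw [hc0, mul_one]
    | one =>
      have := hA 0
      push_cast at this
      apply mul_left_cancel₀ this
      linear_combination s0 - f.coeff 0 * r0 - (gq e1 e2 e3 a0 a1 a2 a3 - z / 4) * f.coeff 0 * hc0
    | more m i1 i2 =>
      have := hA (m + 1)
      push_cast at this
      apply mul_left_cancel₀ this
      have sm := s m
      rw [i1, i2] at sm
      linear_combination sm - f.coeff 0 * r m
  have hfd : f.natDegree = y.natDegree := by
    rw [hf, natDegree_comp, natDegree_X_add_C, mul_one]
  have hf0 : f ≠ 0 := by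
    intro h0
    apply hy
    have := congrArg (fun P : ℂ[X] => P.comp (X - C (e3 : ℂ))) h0
    simpa [hf, comp_assoc] using this
  have hc : f.coeff 0 ≠ 0 := by
    intro h0
    apply hf0
    ext m
    rw [key, h0, zero_mul, coeff_zero]
  have := key (N + 1)
  rw [coeff_eq_zero_of_natDegree_lt (by omega)] at this
  exact (mul_eq_zero.1 this.symm).resolve_left hc

lemma isSol_swap12 (e1 e2 e3 a0 a1 a2 a3 : ℝ) (z : ℂ) (y : ℂ[X])
    (h : IsSol e1 e2 e3 a0 a1 a2 a3 z y) : IsSol e2 e1 e3 a0 a2 a1 a3 z y := by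
  unfold IsSol at *
  rw [hOp_swap12, ← h]
  congr 1 <;> ring

lemma isSol_swap13 (e1 e2 e3 a0 a1 a2 a3 : ℝ) (z : ℂ) (y : ℂ[X])
    (h : IsSol e1 e2 e3 a0 a1 a2 a3 z y) : IsSol e3 e2 e1 a0 a3 a2 a1 z y := by
  unfold IsSol at *
  rw [hOp_swap13, ← h]
  congr 1 <;> ring

lemma isSol_swap23 (e1 e2 e3 a0 a1 a2 a3 : ℝ) (z : ℂ) (y : ℂ[X])
    (h : IsSol e1 e2 e3 a0 a1 a2 a3 z y) : IsSol e1 e3 e2 a0 a1 a3 a2 z y :=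
  isSol_swap12 _ _ _ _ _ _ _ _ _ (isSol_swap13 _ _ _ _ _ _ _ _ _ (isSol_swap12 _ _ _ _ _ _ _ _ _ h))

lemma nonInt_half (a : ℝ) (h : ∃ k : ℤ, 2 * a = k) : NonInt (2 * a + 1 / 2) := by
  obtain ⟨k, hk⟩ := h
  intro i j hij
  have hk' : (2 * a : ℂ) = k := by exact_mod_cast hk
  rw [hk'] at hij
  have : (2 * k + 1 : ℂ) = 2 * (i - j) := by linear_combination 2 * hij
  have : (2 * k + 1 : ℤ) = 2 * (i - j) := by exact_mod_cast this
  omega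

lemma nonInt_half' (a : ℝ) (h : ∃ k : ℤ, 2 * a = k) : NonInt (1 - (2 * a + 1 / 2)) := by
  intro i j hij
  refine nonInt_half a h (j + 1) i ?_
  push_cast
  linear_combination -hij

lemma disj01 (e1 e2 e3 a0 a1 a2 a3 b0 b1 : ℝ) (h23 : e2 ≠ e3) (hb0 : b0 = 1 / 2 - a0)
    (hb1 : b1 = 1 / 2 - a1) (h1 : ∃ k : ℤ, 2 * a1 = k) (h3 : ∃ k : ℤ, 2 * a3 = k) (z : ℂ)
    (hp : ∃ y ≠ 0, IsSol e1 e2 e3 a0 a1 a2 a3 z y)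
    (hr : ∃ y ≠ 0, IsSol e1 e2 e3 b0 b1 a2 a3 z y) : False := by
  obtain ⟨p, hp0, hp⟩ := hp
  obtain ⟨r, hr0, hr⟩ := hr
  subst hb0 hb1
  unfold IsSol at *
  have e : (2 * ((1 / 2 - a1 : ℝ) : ℂ) + 1 / 2) = 2 - (2 * a1 + 1 / 2) := by push_cast; ring
  rw [e] at hr
  refine wr1 _ _ _ _ _ _ _ _ _ _ p r hp0 hr0 (by exact_mod_cast h23) (nonInt_half a3 h3)
    (nonInt_half' a1 h1) ?_ ?_ hp hr
  · push_cast; ring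
  · push_cast; ring

lemma disj12 (e1 e2 e3 a0 a1 a2 a3 b1 b2 : ℝ) (h12 : e1 ≠ e2) (hb1 : b1 = 1 / 2 - a1)
    (hb2 : b2 = 1 / 2 - a2) (h1 : ∃ k : ℤ, 2 * a1 = k) (h3 : ∃ k : ℤ, 2 * a3 = k) (z : ℂ)
    (hp : ∃ y ≠ 0, IsSol e1 e2 e3 a0 a1 a2 a3 z y)
    (hr : ∃ y ≠ 0, IsSol e1 e2 e3 a0 b1 b2 a3 z y) : False := by
  obtain ⟨p, hp0, hp⟩ := hp
  obtain ⟨r, hr0, hr⟩ := hr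
  subst hb2 hb1
  unfold IsSol at *
  have e : (2 * ((1 / 2 - a1 : ℝ) : ℂ) + 1 / 2) = 2 - (2 * a1 + 1 / 2) := by push_cast; ring
  have e' : (2 * ((1 / 2 - a2 : ℝ) : ℂ) + 1 / 2) = 2 - (2 * a2 + 1 / 2) := by push_cast; ring
  rw [e, e'] at hr
  refine wr2 _ _ _ _ _ _ _ _ _ _ p r hp0 hr0 (by exact_mod_cast h12) (nonInt_half a3 h3)
    (nonInt_half' a1 h1) ?_ ?_ hp hr
  · push_cast; ring
  · push_cast; ring

lemma heun_good1 (e1 e2 e3 a0 a1 a2 a3 : ℝ) (h1 : e3 < e1) (h2 : e2 < e3)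
    (h : ∃ k : ℤ, 2 * a3 = k) (N : ℕ) (hN : a0 + a1 + a2 + a3 = -(N : ℝ))
    (hpos : ∀ m : ℕ, m < N →
      0 < ((m : ℝ) + (2 * a3 + 1 / 2)) * (m + (-a0 + 1 / 2 + a1 + a2 + a3))) :
    Good (heunC e1 e2 e3 a0 a1 a2 a3 (N + 1)) := by
  rw [heunC_eq_jac]
  refine jac_good _ _ _ _ (by norm_num) (gA_ne e1 e2 e3 a3 h1.ne' h2.ne h) N ?_
  intro m hm
  have k := hpos m hm
  have hm' : (0 : ℝ) < N - m := sub_pos.2 (by exact_mod_cast hm)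
  have e13 := sub_pos.2 h1
  have e32 := sub_pos.2 h2
  have : gA e1 e2 e3 a3 m * gB a0 a1 a2 a3 m = ((e1 - e3) * (e3 - e2) * (m + 1) * (N - m))
     * (((m : ℝ) + (2 * a3 + 1 / 2)) * (m + (-a0 + 1 / 2 + a1 + a2 + a3))) := by
    unfold gA gB
    rw [hN]; ring
  rw [this]
  positivity

lemma heun_good2 (e1 e2 e3 a0 a1 a2 a3 : ℝ) (hpos : 0 < (e1 - e3) * (e3 - e2))
    (h : ∃ k : ℤ, 2 * a3 = k) (N : ℕ) (hN : a0 + a1 + a2 + a3 = -(N : ℝ))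
    (ha1 : 0 ≤ a1) (ha2 : 2 * a2 = -(N : ℝ)) :
    Good (heunC e1 e2 e3 a0 a1 a2 a3 (N + 1)) := by
  have h13 : e1 ≠ e3 := by rintro rfl; simp at hpos
  have h23 : e2 ≠ e3 := by rintro rfl; simp at hpos
  have h12 : e1 ≠ e2 := by
    rintro rfl
    nlinarith [sq_nonneg (e1 - e3)]
  set A : ℕ → ℝ := fun m => (e1 - e3) * (m + 1) * (m + (2 * a1 + 1 / 2)) with hAdef
  set B : ℕ → ℝ := fun m => -((e3 - e2) * (N - m) * (N - m - 1 + (2 * a2 + 1 / 2))) with hBdef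
  set b : ℕ → ℝ := fun m => gq e1 e2 e3 a0 a1 a2 a3 -
    ((e1 - e2) * m * (m - 1 + (2 * a1 + 1 / 2))
      + (e1 - e3) * (2 * m * (N - m) + (2 * a1 + 1 / 2) * (N - m) + (2 * a2 + 1 / 2) * m
          + (a0 + a1 + a2 + a3) * (-a0 + 1 / 2 + a1 + a2 + a3))
      + (e1 - e2) * (2 * a3 + 1 / 2) * m) with hbdef
  have hA : ∀ m, A m ≠ 0 := by
    intro m
    refine mul_ne_zero (mul_ne_zero (sub_ne_zero.2 h13) (by positivity)) (by positivity)
  have hAB : ∀ m < N, 0 < A m * B m := by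
    intro m hm
    have hm' : (0 : ℝ) < N - m := sub_pos.2 (by exact_mod_cast hm)
    have : A m * B m = ((e1 - e3) * (e3 - e2)) * ((m + 1) * (m + (2 * a1 + 1 / 2)) * (N - m)
      * (m + 1 / 2)) := by
      simp only [hAdef, hBdef, ha2]; ring
    rw [this]
    positivity
  have gd := jac_good (-(1 / 4)) A b B (by norm_num) hA N hAB
  have hdegd := (jac_natDegree (-(1 / 4)) A b B (by norm_num) hA N).2.2.1
  have hdegc : (heunC e1 e2 e3 a0 a1 a2 a3 (N + 1)).natDegree = N + 1 := by
    rw [heunC_eq_jac]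
    exact (jac_natDegree _ _ _ _ (by norm_num) (gA_ne e1 e2 e3 a3 h13 h23 h) N).2.2.1
  have hcne : (heunC e1 e2 e3 a0 a1 a2 a3 (N + 1)).map (algebraMap ℝ ℂ) ≠ 0 := by
    rw [Polynomial.map_ne_zero_iff (algebraMap ℝ ℂ).injective]
    rintro h0
    rw [h0] at hdegc; simp at hdegc
  obtain ⟨gd1, gd2, gd3⟩ := gd
  have hsub : ((jac (-(1 / 4)) A b B (N + 1)).map (algebraMap ℝ ℂ)).roots ≤
      ((heunC e1 e2 e3 a0 a1 a2 a3 (N + 1)).map (algebraMap ℝ ℂ)).roots := by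
    rw [Multiset.le_iff_subset gd2]
    intro z hz
    rw [mem_roots gd1, IsRoot.def, eval_map_algebraMap] at hz
    rw [mem_roots hcne, IsRoot.def, eval_map_algebraMap]
    have k0 := congrArg (aeval z) (jac_one (-(1 / 4)) A b B (hA 0))
    have k := fun m => congrArg (aeval z) (jac_succ (-(1 / 4)) A b B m (hA _))
    simp only [map_mul, map_add, map_sub, aeval_X, aeval_C, Complex.coe_algebraMap] at k0 k
    simp only [hAdef, hbdef, hBdef] at k0 k
    push_cast at k0 k
    have hN' : (a0 + a1 + a2 + a3 : ℂ) = -(N : ℂ) := by exact_mod_cast hN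
    have key := sol_of_rec2 e1 e2 e3 (2 * a1 + 1 / 2) (2 * a2 + 1 / 2) (2 * a3 + 1 / 2)
      (a0 + a1 + a2 + a3) (-a0 + 1 / 2 + a1 + a2 + a3) (gq e1 e2 e3 a0 a1 a2 a3 - z / 4) (by ring)
      N hN' (fun m => aeval z (jac (-(1 / 4)) A b B m))
      (by linear_combination k0) (fun m => by linear_combination k m) N 0 rfl
    have hX : ∀ e : ℂ, (X - C e : ℂ[X]) ≠ 0 := X_sub_C_ne_zero
    rw [hz] at key
    simp only [Nat.cast_zero, mul_zero, zero_mul, map_zero, neg_zero, sub_zero] at key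
    have key' := (mul_eq_zero.1 key).resolve_left (mul_ne_zero (hX _) (hX _))
    refine root_of_sol e1 e2 e3 a0 a1 a2 a3 h13 h23 h N z _ ?_ ?_ ((isSol_iff ..).2 key')
    · intro h0
      have := congrArg (eval (e1 : ℂ)) h0
      rw [eval_finsetSum, Finset.sum_range_succ'] at this
      simp [jac] at this
      exact h12 (by exact_mod_cast sub_eq_zero.1 this.1)
    · refine natDegree_sum_le_of_forall_le _ _ ?_
      intro m hm
      have hm' : m ≤ N := by simp at hm; omega
      refine (natDegree_C_mul_le _ _).trans ?_
      refine natDegree_mul_le.trans ?_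
      simp only [natDegree_pow, natDegree_X_sub_C]
      omega
  have hcard : Multiset.card ((jac (-(1 / 4)) A b B (N + 1)).map (algebraMap ℝ ℂ)).roots = N + 1 := by
    rw [← (IsAlgClosed.splits _).natDegree_eq_card_roots, natDegree_map, hdegd]
  have heq := Multiset.eq_of_le_of_card_le hsub (by
    refine (card_roots' _).trans ?_
    rw [hcard, natDegree_map, hdegc])
  rw [Good, ← heq]
  exact ⟨hcne, gd2, gd3⟩

lemma heunC_swap (e1 e2 e3 a0 a1 a2 a3 : ℝ) (n : ℕ) :
    heunC e1 e2 e3 a0 a1 a2 a3 n = heunC e2 e1 e3 a0 a2 a1 a3 n := by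
  rw [heunC_eq_jac, heunC_eq_jac]
  congr 1
  · funext m; unfold gA; ring
  · funext m; unfold gb gq; ring
  · funext m; unfold gB; ring

lemma good_specP (e1 e2 e3 a0 a1 a2 a3 : ℝ) (N : ℕ)
    (h : Good (heunC e1 e2 e3 a0 a1 a2 a3 (N + 1))) : Good (specP e1 e2 e3 a0 a1 a2 a3 N) := by
  have hne : heunC e1 e2 e3 a0 a1 a2 a3 (N + 1) ≠ 0 := by
    rintro h0; exact h.1 (by rw [h0, Polynomial.map_zero])
  have hl : (algebraMap ℝ ℂ) (heunC e1 e2 e3 a0 a1 a2 a3 (N + 1)).leadingCoeff⁻¹ ≠ 0 := by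
    simpa using hne
  unfold Good specP at *
  rw [Polynomial.map_mul, map_C, roots_C_mul _ hl]
  exact ⟨mul_ne_zero (C_ne_zero.2 hl) h.1, h.2⟩

lemma root_specP (e1 e2 e3 a0 a1 a2 a3 : ℝ) (N : ℕ)
    (h : Good (heunC e1 e2 e3 a0 a1 a2 a3 (N + 1))) (z : ℂ)
    (hz : aeval z (specP e1 e2 e3 a0 a1 a2 a3 N) = 0) :
    aeval z (heunC e1 e2 e3 a0 a1 a2 a3 (N + 1)) = 0 := by
  have hne : heunC e1 e2 e3 a0 a1 a2 a3 (N + 1) ≠ 0 := by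
    rintro h0; exact h.1 (by rw [h0, Polynomial.map_zero])
  unfold specP at hz
  simpa [hne] using hz

lemma good_mul (P Q : ℝ[X]) (hP : Good P) (hQ : Good Q)
    (h : ∀ z : ℂ, aeval z P = 0 → aeval z Q = 0 → False) : Good (P * Q) := by
  obtain ⟨p1, p2, p3⟩ := hP
  obtain ⟨q1, q2, q3⟩ := hQ
  have hne : (P.map (algebraMap ℝ ℂ)) * (Q.map (algebraMap ℝ ℂ)) ≠ 0 := mul_ne_zero p1 q1
  unfold Good
  rw [Polynomial.map_mul, roots_mul hne]
  refine ⟨hne, ?_, ?_⟩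
  · rw [Multiset.nodup_add]
    refine ⟨p2, q2, ?_⟩
    rw [Multiset.disjoint_left]
    intro z hz hz'
    rw [mem_roots p1, IsRoot.def, eval_map_algebraMap] at hz
    rw [mem_roots q1, IsRoot.def, eval_map_algebraMap] at hz'
    exact h z hz hz'
  · intro z hz
    rcases Multiset.mem_add.1 hz with hz | hz
    · exact p3 z hz
    · exact q3 z hz

lemma half_negN (l : ℕ) : ∃ k : ℤ, 2 * (-(l : ℝ) / 2) = k := ⟨-l, by push_cast; ring⟩
lemma half_posN (l : ℕ) : ∃ k : ℤ, 2 * (((l : ℝ) + 1) / 2) = k := ⟨l + 1, by push_cast; ring⟩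

lemma specP_package (e1 e2 e3 a0 a1 a2 a3 : ℝ) (h1 : e3 < e1) (h2 : e2 < e3)
    (h : ∃ k : ℤ, 2 * a3 = k) (N : ℕ) (hN : a0 + a1 + a2 + a3 = -(N : ℝ))
    (hg : Good (heunC e1 e2 e3 a0 a1 a2 a3 (N + 1))) :
    Good (specP e1 e2 e3 a0 a1 a2 a3 N) ∧
    ∀ z : ℂ, aeval z (specP e1 e2 e3 a0 a1 a2 a3 N) = 0 →
      ∃ y ≠ 0, IsSol e1 e2 e3 a0 a1 a2 a3 z y :=
  ⟨good_specP _ _ _ _ _ _ _ _ hg, fun z hz => exists_sol _ _ _ _ _ _ _ h1.ne' h2.ne h N hN z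
    (root_specP _ _ _ _ _ _ _ _ hg z hz)⟩

/-- If `l0 + l3 = l1 + l2 + 1`, `l0 + l1 ≥ l2 + l3 + 1` and
`l0 + l2 ≥ l1 + l3 + 1`, with `e1 > e3 > e2` and `e1+e2+e3 = 0` (purely imaginary modulus),
then all zeros of the spectral polynomial `Q^{(l0,l1,l2,l3)}` are real and unequal. -/
theorem specQ_real_distinct_roots_case3
    (l0 l1 l2 l3 : ℕ) (hl : l0 + l3 = l1 + l2 + 1)
    (hl1 : l2 + l3 + 1 ≤ l0 + l1) (hl2 : l1 + l3 + 1 ≤ l0 + l2)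
    (e1 e2 e3 : ℝ) (h13 : e3 < e1) (h32 : e2 < e3) (hsum : e1 + e2 + e3 = 0) :
    (specQ e1 e2 e3 l0 l1 l2 l3).map (algebraMap ℝ ℂ) ≠ 0 ∧
    ((specQ e1 e2 e3 l0 l1 l2 l3).map (algebraMap ℝ ℂ)).roots.Nodup ∧
    ∀ z ∈ ((specQ e1 e2 e3 l0 l1 l2 l3).map (algebraMap ℝ ℂ)).roots, z.im = 0 := by
  have hlR : (l0 : ℝ) + l3 = l1 + l2 + 1 := by exact_mod_cast hl
  have hl1R : (l2 : ℝ) + l3 + 1 ≤ l0 + l1 := by exact_mod_cast hl1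
  have hodd : ¬ ((l0 + l1 + l2 + l3) % 2 = 0) := by omega
  have hpos : 0 < (e1 - e3) * (e3 - e2) := mul_pos (sub_pos.2 h13) (sub_pos.2 h32)
  -- the factor with index 0
  have P0 : Good (specP0 e1 e2 e3 l0 l1 l2 l3) ∧ ∀ z : ℂ,
      aeval z (specP0 e1 e2 e3 l0 l1 l2 l3) = 0 → ∃ y ≠ 0, IsSol e1 e2 e3 (((l0 : ℝ) + 1) / 2)
        (-(l1 : ℝ) / 2) (-(l2 : ℝ) / 2) (-(l3 : ℝ) / 2) z y := by
    unfold specP0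
    rw [if_neg hodd, if_neg (by omega)]
    split_ifs with h0
    · exact ⟨by simp [Good], fun z hz => by simp at hz⟩
    · have hl3 : 1 ≤ l3 := by omega
      have hNn : (l1 + l2 + l3 - l0 - 1) / 2 = l3 - 1 := by omega
      rw [hNn]
      have hc : ((l3 - 1 : ℕ) : ℝ) = l3 - 1 := by push_cast [hl3]; ring
      have hN : ((l0 : ℝ) + 1) / 2 + -(l1 : ℝ) / 2 + -(l2 : ℝ) / 2 + -(l3 : ℝ) / 2
          = -((l3 - 1 : ℕ) : ℝ) := by rw [hc]; linarith
      refine specP_package _ _ _ _ _ _ _ h13 h32 (half_negN l3) _ hN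
        (heun_good1 _ _ _ _ _ _ _ h13 h32 (half_negN l3) _ hN ?_)
      intro m hm
      have hm1 : (m : ℝ) + 2 ≤ l3 := by exact_mod_cast (by omega : m + 2 ≤ l3)
      have hm2 : (l3 : ℝ) ≤ l1 + l2 := by exact_mod_cast (by omega : l3 ≤ l1 + l2)
      apply mul_pos_of_neg_of_neg <;> linarith
  have P1 : Good (specP1 e1 e2 e3 l0 l1 l2 l3) ∧ ∀ z : ℂ,
      aeval z (specP1 e1 e2 e3 l0 l1 l2 l3) = 0 → ∃ y ≠ 0, IsSol e1 e2 e3 (-(l0 : ℝ) / 2)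
        (((l1 : ℝ) + 1) / 2) (-(l2 : ℝ) / 2) (-(l3 : ℝ) / 2) z y := by
    unfold specP1
    rw [if_neg hodd, if_neg (by omega), if_neg (by omega)]
    have hNn : (l0 + l2 + l3 - l1 - 1) / 2 = l2 := by omega
    rw [hNn]
    have hN : -(l0 : ℝ) / 2 + ((l1 : ℝ) + 1) / 2 + -(l2 : ℝ) / 2 + -(l3 : ℝ) / 2
          = -(l2 : ℝ) := by linarith
    exact specP_package _ _ _ _ _ _ _ h13 h32 (half_negN l3) _ hN
        (heun_good2 _ _ _ _ _ _ _ hpos (half_negN l3) _ hN (by positivity) (by ring))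
  have P2 : Good (specP2 e1 e2 e3 l0 l1 l2 l3) ∧ ∀ z : ℂ,
      aeval z (specP2 e1 e2 e3 l0 l1 l2 l3) = 0 → ∃ y ≠ 0, IsSol e1 e2 e3 (-(l0 : ℝ) / 2)
        (-(l1 : ℝ) / 2) (((l2 : ℝ) + 1) / 2) (-(l3 : ℝ) / 2) z y := by
    unfold specP2
    rw [if_neg hodd, if_neg (by omega), if_neg (by omega)]
    have hNn : (l0 + l1 + l3 - l2 - 1) / 2 = l1 := by omega
    rw [hNn]
    have hN : -(l0 : ℝ) / 2 + -(l1 : ℝ) / 2 + ((l2 : ℝ) + 1) / 2 + -(l3 : ℝ) / 2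
          = -(l1 : ℝ) := by linarith
    refine specP_package _ _ _ _ _ _ _ h13 h32 (half_negN l3) _ hN ?_
    rw [heunC_swap]
    exact heun_good2 _ _ _ _ _ _ _ (by linarith) (half_negN l3) _ (by linarith)
      (by positivity) (by ring)
  have P3 : Good (specP3 e1 e2 e3 l0 l1 l2 l3) ∧ ∀ z : ℂ,
      aeval z (specP3 e1 e2 e3 l0 l1 l2 l3) = 0 → ∃ y ≠ 0, IsSol e1 e2 e3 (-(l0 : ℝ) / 2)
        (-(l1 : ℝ) / 2) (-(l2 : ℝ) / 2) (((l3 : ℝ) + 1) / 2) z y := by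
    unfold specP3
    rw [if_neg hodd, if_neg (by omega), if_neg (by omega)]
    have hl0 : 1 ≤ l0 := by omega
    have hNn : (l0 + l1 + l2 - l3 - 1) / 2 = l0 - 1 := by omega
    rw [hNn]
    have hc : ((l0 - 1 : ℕ) : ℝ) = l0 - 1 := by push_cast [hl0]; ring
    have hN : -(l0 : ℝ) / 2 + -(l1 : ℝ) / 2 + -(l2 : ℝ) / 2 + ((l3 : ℝ) + 1) / 2
          = -((l0 - 1 : ℕ) : ℝ) := by rw [hc]; linarith
    refine specP_package _ _ _ _ _ _ _ h13 h32 (half_posN l3) _ hN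
        (heun_good1 _ _ _ _ _ _ _ h13 h32 (half_posN l3) _ hN ?_)
    intro m hm
    have hm0 : (0 : ℝ) ≤ m := Nat.cast_nonneg m
    have hl3 : (0 : ℝ) ≤ l3 := Nat.cast_nonneg l3
    apply mul_pos <;> linarith
  have n12 : e1 ≠ e2 := (h32.trans h13).ne'
  have n13 : e1 ≠ e3 := h13.ne'
  have n23 : e2 ≠ e3 := h32.ne
  obtain ⟨G0, S0⟩ := P0
  obtain ⟨G1, S1⟩ := P1
  obtain ⟨G2, S2⟩ := P2
  obtain ⟨G3, S3⟩ := P3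
  have D01 : ∀ z : ℂ, aeval z (specP0 e1 e2 e3 l0 l1 l2 l3) = 0 →
      aeval z (specP1 e1 e2 e3 l0 l1 l2 l3) = 0 → False := fun z hz hz' =>
    disj01 _ _ _ _ _ _ _ _ _ n23 (by ring) (by ring) (half_negN l1) (half_negN l3) z
      (S0 z hz) (S1 z hz')
  have D02 : ∀ z : ℂ, aeval z (specP0 e1 e2 e3 l0 l1 l2 l3) = 0 →
      aeval z (specP2 e1 e2 e3 l0 l1 l2 l3) = 0 → False := fun z hz hz' =>
    disj01 _ _ _ _ _ _ _ _ _ n13 (by ring) (by ring) (half_negN l2) (half_negN l3) z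
      ((S0 z hz).imp fun _ h => ⟨h.1, isSol_swap12 _ _ _ _ _ _ _ _ _ h.2⟩)
      ((S2 z hz').imp fun _ h => ⟨h.1, isSol_swap12 _ _ _ _ _ _ _ _ _ h.2⟩)
  have D03 : ∀ z : ℂ, aeval z (specP0 e1 e2 e3 l0 l1 l2 l3) = 0 →
      aeval z (specP3 e1 e2 e3 l0 l1 l2 l3) = 0 → False := fun z hz hz' =>
    disj01 _ _ _ _ _ _ _ _ _ n12.symm (by ring) (by ring) (half_negN l3) (half_negN l1) z
      ((S0 z hz).imp fun _ h => ⟨h.1, isSol_swap13 _ _ _ _ _ _ _ _ _ h.2⟩)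
      ((S3 z hz').imp fun _ h => ⟨h.1, isSol_swap13 _ _ _ _ _ _ _ _ _ h.2⟩)
  have D12 : ∀ z : ℂ, aeval z (specP1 e1 e2 e3 l0 l1 l2 l3) = 0 →
      aeval z (specP2 e1 e2 e3 l0 l1 l2 l3) = 0 → False := fun z hz hz' =>
    disj12 _ _ _ _ _ _ _ _ _ n12 (by ring) (by ring) (half_posN l1) (half_negN l3) z
      (S1 z hz) (S2 z hz')
  have D13 : ∀ z : ℂ, aeval z (specP1 e1 e2 e3 l0 l1 l2 l3) = 0 →
      aeval z (specP3 e1 e2 e3 l0 l1 l2 l3) = 0 → False := fun z hz hz' =>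
    disj12 _ _ _ _ _ _ _ _ _ n13 (by ring) (by ring) (half_posN l1) (half_negN l2) z
      ((S1 z hz).imp fun _ h => ⟨h.1, isSol_swap23 _ _ _ _ _ _ _ _ _ h.2⟩)
      ((S3 z hz').imp fun _ h => ⟨h.1, isSol_swap23 _ _ _ _ _ _ _ _ _ h.2⟩)
  have D23 : ∀ z : ℂ, aeval z (specP2 e1 e2 e3 l0 l1 l2 l3) = 0 →
      aeval z (specP3 e1 e2 e3 l0 l1 l2 l3) = 0 → False := fun z hz hz' =>
    disj12 _ _ _ _ _ _ _ _ _ n23.symm (by ring) (by ring) (half_negN l3) (half_negN l1) z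
      ((S2 z hz).imp fun _ h => ⟨h.1, isSol_swap13 _ _ _ _ _ _ _ _ _ h.2⟩)
      ((S3 z hz').imp fun _ h => ⟨h.1, isSol_swap13 _ _ _ _ _ _ _ _ _ h.2⟩)
  have final : Good (specQ e1 e2 e3 l0 l1 l2 l3) := by
    unfold specQ
    refine good_mul _ _ (good_mul _ _ (good_mul _ _ G0 G1 D01) G2 ?_) G3 ?_
    · intro z hz hz'
      rw [map_mul, mul_eq_zero] at hz
      exact hz.elim (fun h => D02 z h hz') (fun h => D12 z h hz')
    · intro z hz hz'
      rw [map_mul, map_mul, mul_eq_zero, mul_eq_zero] at hz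
      exact hz.elim (fun h => h.elim (fun h => D03 z h hz') (fun h => D13 z h hz'))
        (fun h => D23 z h hz')
  exact final
end
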